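/- Let P ⊆ Φ_{B_n} be a signed poset such that no connected ideal of P intersects two or more other connected ideals of P nontrivially (i.e., P is an initial complete intersection). Then for every x ∈ ℝ^n such that ⟨x, χ_J⟩ ≠ 0 for every nonempty ideal J of P: Σ_{w ∈ 𝓛(P)} ∏_{m=1}^n ⟨x, χ_{J^w_m}⟩^{−1} = (∏_{{J,K} ∈ Π(P)} ⟨x, χ_J + χ_K⟩) / (∏_{J ∈ J_conn(P)} ⟨x, χ_J⟩). -/

import Mathlib

open scoped Classical

noncomputable section

/-- Signed index set `±[n]`: `(true, i)` represents `+i`, `(false, i)` represents `-i`. -/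
abbrev SIdx (n : ℕ) := Bool × Fin n

/-- Negation `a ↦ -a` on `±[n]`. -/
def negS {n : ℕ} (a : SIdx n) : SIdx n := (!a.1, a.2)

/-- Standard basis vector `e_i` of `ℝ^n`. -/
def stdB (n : ℕ) (i : Fin n) : Fin n → ℝ := Pi.single i 1

/-- `rsgn true = 1`, `rsgn false = -1`. -/
def rsgn (s : Bool) : ℝ := if s then 1 else -1

/-- `v(a)` for `a ∈ ±[n]`: `v(+i) = e_i`, `v(-i) = -e_i`. -/
def vS {n : ℕ} (a : SIdx n) : Fin n → ℝ := rsgn a.1 • stdB n a.2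

/-- `v` on `±[n] ∪ {0}` (with `none` playing the role of `0`). -/
def vO {n : ℕ} : Option (SIdx n) → (Fin n → ℝ)
  | none => 0
  | some a => vS a

/-- Negation on `±[n] ∪ {0}`, fixing `0`. -/
def negO {n : ℕ} : Option (SIdx n) → Option (SIdx n)
  | none => none
  | some a => some (negS a)

/-- Standard inner product on `ℝ^n`. -/
def dotR {n : ℕ} (x y : Fin n → ℝ) : ℝ := ∑ i, x i * y i

/-- The type `B_n` root system `Φ_{B_n}`. -/
def BnRoots (n : ℕ) : Set (Fin n → ℝ) :=
  {α | (∃ i j : Fin n, i < j ∧ ∃ s t : Bool, α = rsgn s • stdB n i + rsgn t • stdB n j) ∨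
    ∃ i : Fin n, ∃ s : Bool, α = rsgn s • stdB n i}

/-- The positive roots `Φ⁺_{B_n}`. -/
def BnPos (n : ℕ) : Set (Fin n → ℝ) :=
  {α | (∃ i j : Fin n, i < j ∧ ∃ t : Bool, α = stdB n i + rsgn t • stdB n j) ∨
    ∃ i : Fin n, α = stdB n i}

/-- The type `C_n` root system `Φ_{C_n}`. -/
def CnRoots (n : ℕ) : Set (Fin n → ℝ) :=
  {α | (∃ i j : Fin n, i < j ∧ ∃ s t : Bool, α = rsgn s • stdB n i + rsgn t • stdB n j) ∨
    ∃ i : Fin n, ∃ s : Bool, α = (2 * rsgn s) • stdB n i}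

/-- Nonnegative real linear combinations of elements of `S`. -/
def nnSpan {n : ℕ} (S : Set (Fin n → ℝ)) : Set (Fin n → ℝ) :=
  {x | ∃ (r : ℕ) (c : Fin r → ℝ) (β : Fin r → (Fin n → ℝ)),
    (∀ m, 0 ≤ c m) ∧ (∀ m, β m ∈ S) ∧ x = ∑ m, c m • β m}

/-- A signed poset: a subset of `Φ_{B_n}`, antisymmetric and closed under positive
linear combinations remaining in `Φ_{B_n}`. -/
def IsSignedPoset (n : ℕ) (P : Set (Fin n → ℝ)) : Prop :=
  P ⊆ BnRoots n ∧ (∀ α ∈ P, -α ∉ P) ∧ ∀ α ∈ BnRoots n, α ∈ nnSpan P → α ∈ P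

/-- A `C_n`-signed poset. -/
def IsCnSignedPoset (n : ℕ) (Q : Set (Fin n → ℝ)) : Prop :=
  Q ⊆ CnRoots n ∧ (∀ α ∈ Q, -α ∉ Q) ∧ ∀ α ∈ CnRoots n, α ∈ nnSpan Q → α ∈ Q

/-- The root cone `K^rt_P`. -/
def rootCone {n : ℕ} (P : Set (Fin n → ℝ)) : Set (Fin n → ℝ) := nnSpan P

/-- The weight cone `K^wt_P`. -/
def weightCone {n : ℕ} (P : Set (Fin n → ℝ)) : Set (Fin n → ℝ) :=
  {f | ∀ α ∈ P, 0 ≤ dotR f α}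

/-- The Fischer (strict) order on `±[n] ∪ {0}`:
`a < b` iff `v(a) - v(b) ∈ P`, or (`b = -a ≠ 0` and `v(a) ∈ P`). -/
def fLT {n : ℕ} (P : Set (Fin n → ℝ)) (a b : Option (SIdx n)) : Prop :=
  vO a - vO b ∈ P ∨ (a ≠ none ∧ b = negO a ∧ vO a ∈ P)

/-- A subset of `±[n]` is isotropic if it contains no pair `{i, -i}`. -/
def Isotropic {n : ℕ} (J : Finset (SIdx n)) : Prop :=
  ∀ i : Fin n, ¬((true, i) ∈ J ∧ (false, i) ∈ J)

/-- Signed characteristic vector of a subset of `±[n]`. -/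
def chiF {n : ℕ} (J : Finset (SIdx n)) : Fin n → ℝ := fun i =>
  if (true, i) ∈ J then 1 else if (false, i) ∈ J then -1 else 0

/-- `J` is an ideal of the signed poset `P`. -/
def IsIdeal {n : ℕ} (P : Set (Fin n → ℝ)) (J : Finset (SIdx n)) : Prop :=
  Isotropic J ∧ ∀ α ∈ P, 0 ≤ dotR (chiF J) α

/-- Comparability in the Fischer order of `P`. -/
def fComp {n : ℕ} (P : Set (Fin n → ℝ)) (a b : SIdx n) : Prop :=
  fLT P (some a) (some b) ∨ fLT P (some b) (some a)

/-- One step in the comparability graph on a subset `J` of `±[n]`. -/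
def connStep {n : ℕ} (P : Set (Fin n → ℝ)) (J : Finset (SIdx n)) (a b : SIdx n) : Prop :=
  a ∈ J ∧ b ∈ J ∧ fComp P a b

/-- `J` is connected: nonempty, and any two of its elements are joined by a path inside `J`
in the comparability graph of the Fischer order of `P`. -/
def IsConnectedIdl {n : ℕ} (P : Set (Fin n → ℝ)) (J : Finset (SIdx n)) : Prop :=
  J.Nonempty ∧ ∀ a ∈ J, ∀ b ∈ J, Relation.ReflTransGen (connStep P J) a b

/-- A connected ideal of `P`. -/
def IsConnIdeal {n : ℕ} (P : Set (Fin n → ℝ)) (J : Finset (SIdx n)) : Prop :=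
  IsIdeal P J ∧ IsConnectedIdl P J

/-- Support `supp J = {|a| : a ∈ J}`. -/
def suppF {n : ℕ} (J : Finset (SIdx n)) : Finset (Fin n) := J.image Prod.snd

/-- `J` and `K` intersect nontrivially. -/
def NontrivInter {n : ℕ} (J K : Finset (SIdx n)) : Prop :=
  (suppF J ∩ suppF K).Nonempty ∧ ¬J ⊆ K ∧ ¬K ⊆ J

/-- `J` and `K` intersect trivially. -/
def TrivInter {n : ℕ} (J K : Finset (SIdx n)) : Prop := ¬NontrivInter J K

/-- A signed permutation, as an anti-symmetric bijection of `±[n]`. -/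
def IsSPerm {n : ℕ} (w : SIdx n ≃ SIdx n) : Prop := ∀ a, w (negS a) = negS (w a)

/-- Linear action of a signed permutation on `ℝ^n`, determined by `w(e_i) = v(w(+i))`. -/
def spAct {n : ℕ} (w : SIdx n ≃ SIdx n) (x : Fin n → ℝ) : Fin n → ℝ :=
  ∑ i, x i • vS (w (true, i))

/-- `w` is a linear extension of `P`: a signed permutation with `P ⊆ w(Φ⁺_{B_n})`. -/
def IsLinExt {n : ℕ} (P : Set (Fin n → ℝ)) (w : SIdx n ≃ SIdx n) : Prop :=
  IsSPerm w ∧ ∀ α ∈ P, ∃ β ∈ BnPos n, α = spAct w β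

/-- The (finite) set `𝓛(P)` of linear extensions of `P`. -/
def linExts (n : ℕ) (P : Set (Fin n → ℝ)) : Finset (SIdx n ≃ SIdx n) :=
  Finset.univ.filter (IsLinExt P)

/-- Simple roots of `Φ_{B_n}`: `α_i = e_i - e_{i+1}` for `i < n - 1`, `α_{n-1} = e_{n-1}`
(0-indexed). -/
def simpleRoot (n : ℕ) (i : Fin n) : Fin n → ℝ := fun j =>
  (if j = i then (1 : ℝ) else 0) - if (j : ℕ) = (i : ℕ) + 1 then 1 else 0

/-- `J^w_m = {w(1), …, w(m)}` (0-indexed: the images under `w` of `+1, …, +(m+1)`). -/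
def JwSet {n : ℕ} (w : SIdx n ≃ SIdx n) (m : Fin n) : Finset (SIdx n) :=
  (Finset.univ.filter (fun j : Fin n => j ≤ m)).image (fun j => w (true, j))

/-- An extensible ideal of `P`. -/
def Extensible (n : ℕ) (P : Set (Fin n → ℝ)) (J : Finset (SIdx n)) : Prop :=
  ∃ I : Finset (SIdx n), I.Nonempty ∧ Disjoint I J ∧
    IsIdeal P (J ∪ I) ∧ IsIdeal P (J ∪ I.image negS)

/-- The finite set `J_conn(P)` of connected ideals of `P`. -/
def JconnF (n : ℕ) (P : Set (Fin n → ℝ)) : Finset (Finset (SIdx n)) :=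
  Finset.univ.filter (IsConnIdeal P)

/-- Membership in `Π(P)`: an unordered pair of nontrivially intersecting connected ideals. -/
def inPiP {n : ℕ} (P : Set (Fin n → ℝ)) (p : Sym2 (Finset (SIdx n))) : Prop :=
  ∃ J K : Finset (SIdx n),
    p = s(J, K) ∧ IsConnIdeal P J ∧ IsConnIdeal P K ∧ NontrivInter J K

/-- The finite set `Π(P)` of unordered pairs of nontrivially intersecting connected ideals. -/
def PiP (n : ℕ) (P : Set (Fin n → ℝ)) : Finset (Sym2 (Finset (SIdx n))) :=
  Finset.univ.filter (inPiP P)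

/-- No connected ideal of `P` intersects two or more other connected ideals nontrivially. -/
def NoDoubleNontriv (n : ℕ) (P : Set (Fin n → ℝ)) : Prop :=
  ∀ J K K' : Finset (SIdx n), IsConnIdeal P J → IsConnIdeal P K → IsConnIdeal P K' →
    NontrivInter J K → NontrivInter J K' → K = K'

/-- The connected component of `a` inside `J` (w.r.t. the Fischer comparability graph). -/
def componentIn {n : ℕ} (P : Set (Fin n → ℝ)) (J : Finset (SIdx n)) (a : SIdx n) :
    Finset (SIdx n) :=
  J.filter (fun b => Relation.ReflTransGen (connStep P J) a b)

/-- The set of connected components of `J`. -/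
def componentsOf {n : ℕ} (P : Set (Fin n → ℝ)) (J : Finset (SIdx n)) :
    Finset (Finset (SIdx n)) :=
  J.image (componentIn P J)

/-- The signed support `supp±(f) = {sgn(f_i)·i : f_i ≠ 0}` of a vector `f ∈ ℝ^n`. -/
def suppPM {n : ℕ} (f : Fin n → ℝ) : Finset (SIdx n) :=
  Finset.univ.filter (fun a : SIdx n => if a.1 then 0 < f a.2 else f a.2 < 0)

/-- Index type for the variables `U_J`, `J` a connected ideal of `P`. -/
abbrev ConnIdx (n : ℕ) (P : Set (Fin n → ℝ)) := {J : Finset (SIdx n) // IsConnIdeal P J}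

/-- Integer signed characteristic vector, as an exponent vector for Laurent monomials. -/
def chiZ {n : ℕ} (J : Finset (SIdx n)) : Fin n →₀ ℤ :=
  Finsupp.equivFunOnFinite.symm (fun i =>
    if (true, i) ∈ J then 1 else if (false, i) ∈ J then -1 else 0)

/-- The map `φ : k[U_J : J ∈ J_conn(P)] → k[x_1^{±1}, …, x_n^{±1}]`, `U_J ↦ x^{χ_J}`. -/
def phiWt (n : ℕ) (P : Set (Fin n → ℝ)) (k : Type) [Field k] :
    MvPolynomial (ConnIdx n P) k →ₐ[k] AddMonoidAlgebra k (Fin n →₀ ℤ) :=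
  MvPolynomial.aeval (fun J => AddMonoidAlgebra.single (chiZ J.val) 1)

/-- The binomial `syz(U_J, U_K) = U_J U_K - (∏_A U_A) (∏_B U_B)`, where `A` runs over the
connected components of `J ∩ K` and `B` over the connected components of `supp±(χ_J + χ_K)`. -/
def syzPoly (n : ℕ) (P : Set (Fin n → ℝ)) (k : Type) [Field k] (J K : ConnIdx n P) :
    MvPolynomial (ConnIdx n P) k :=
  MvPolynomial.X J * MvPolynomial.X K -
    (∏ A ∈ Finset.univ.filter
        (fun A : ConnIdx n P => (A : Finset (SIdx n)) ∈ componentsOf P (J.val ∩ K.val)),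
        MvPolynomial.X A) *
      ∏ B ∈ Finset.univ.filter
        (fun B : ConnIdx n P =>
          (B : Finset (SIdx n)) ∈ componentsOf P (suppPM (chiF J.val + chiF K.val))),
        MvPolynomial.X B

/-- `θ_1, …, θ_r` is a regular sequence: the ideal it generates is proper, and each `θ_{m+1}`
is a non-zero-divisor modulo the ideal generated by `θ_1, …, θ_m`. -/
def IsRegSeq {R : Type} [CommRing R] {r : ℕ} (θ : Fin r → R) : Prop :=
  Ideal.span (Set.range θ) ≠ ⊤ ∧
    ∀ (m : ℕ) (hm : m < r) (x : R),
      θ ⟨m, hm⟩ * x ∈ Ideal.span (θ '' {j : Fin r | (j : ℕ) < m}) →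
        x ∈ Ideal.span (θ '' {j : Fin r | (j : ℕ) < m})

/-- The induced signed poset `P_A = P ∩ span_ℝ{e_i : i ∈ A}`. -/
def inducedPoset (n : ℕ) (P : Set (Fin n → ℝ)) (A : Finset (Fin n)) : Set (Fin n → ℝ) :=
  {α | α ∈ P ∧ α ∈ Submodule.span ℝ (stdB n '' (A : Set (Fin n)))}

/-- The major index of a signed permutation. -/
def majB {n : ℕ} (w : SIdx n ≃ SIdx n) : ℕ :=
  ∑ i ∈ Finset.univ.filter
      (fun i : Fin n => spAct w (simpleRoot n i) ∉ BnPos n), ((i : ℕ) + 1)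

/-- `[m]_q = 1 + q + ⋯ + q^{m-1}` in `ℤ[q]`. -/
def qInt (m : ℕ) : Polynomial ℤ := ∑ t ∈ Finset.range m, Polynomial.X ^ t

/-- The symmetric function `{J, K} ↦ ⟨x, χ_J + χ_K⟩` on unordered pairs. -/
def pairDot {n : ℕ} (x : Fin n → ℝ) : Sym2 (Finset (SIdx n)) → ℝ :=
  Sym2.lift ⟨fun J K => dotR x (chiF J + chiF K),
    fun J K => congrArg (dotR x) (add_comm (chiF J) (chiF K))⟩

/-- The symmetric function `{J, K} ↦ [|J| + |K|]_q` on unordered pairs. -/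
def pairQ {n : ℕ} : Sym2 (Finset (SIdx n)) → Polynomial ℤ :=
  Sym2.lift ⟨fun J K => qInt (J.card + K.card),
    fun J K => congrArg qInt (Nat.add_comm J.card K.card)⟩

/-- The principal order ideal `I_≤(a)` in the Fischer order restricted to `±[n]`. -/
def Ile {n : ℕ} (P : Set (Fin n → ℝ)) (a : SIdx n) : Set (SIdx n) :=
  {b | b = a ∨ fLT P (some b) (some a)}

/-- A set of signed indices is isotropic if it contains no pair `{i, -i}`. -/
def IsoSet {n : ℕ} (S : Set (SIdx n)) : Prop :=
  ∀ i : Fin n, ¬((true, i) ∈ S ∧ (false, i) ∈ S)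

/-- A covering pair of the Fischer order of `P`. -/
def CovPair {n : ℕ} (P : Set (Fin n → ℝ)) (a b : Option (SIdx n)) : Prop :=
  fLT P a b ∧ ¬∃ c : Option (SIdx n), fLT P a c ∧ fLT P c b

/-- The set of covering roots of `P`. -/
def covRoots {n : ℕ} (P : Set (Fin n → ℝ)) : Set (Fin n → ℝ) :=
  {x | ∃ a b : Option (SIdx n), CovPair P a b ∧ x = vO a - vO b}

/-- The set `J_ε = {i : ε_i = 1} ∪ {-i : ε_i = -1}` attached to a `{-1,0,1}`-vector. -/
def Jeps {n : ℕ} (ε : Fin n → ℝ) : Set (SIdx n) :=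
  {a | (a.1 = true ∧ ε a.2 = 1) ∨ (a.1 = false ∧ ε a.2 = -1)}

/-!
For every signed poset `P`, the sum over linear extensions equals the sum of
`∏_{J ∈ T} ⟨x, χ_J⟩⁻¹` over the maximal families `T` of connected ideals that pairwise intersect
trivially. Both sums split according to an ideal `U` with `n` elements: the last set `J^w_n` of a
linear extension, the union of a family. Restricted to subsets of an ideal `U`, both satisfy
`⟨x, χ_U⟩ S(U) = ∑_a S(U ∖ {a})`, where `a` runs over the elements for which `U ∖ {a}` is an ideal.
For linear extensions `a` is the last entry. For families, `⟨x, χ_U⟩` is the sum of `⟨x, χ_J⟩` over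
the maximal members `J` of `T`, and deleting such a `J` from `T` deletes exactly one element `a`
from the union.

If no connected ideal intersects two others nontrivially, the conflict graph on connected ideals is
a matching, so a maximal independent set consists of all isolated vertices and one endpoint of each
edge, and the sum factors through `1 / y_J + 1 / y_K = (y_J + y_K) / (y_J y_K)`.
-/
section MaximalIndependentSets

variable {β : Type*} {G : SimpleGraph β} {V T : Finset β} {J K : β}

/-- `T` is an inclusion-maximal independent set of the subgraph of `G` induced on `V`; a vertex
of `V` belongs to such a `T` exactly when none of its neighbours does. -/
structure IsMaxIndepIn (G : SimpleGraph β) (V T : Finset β) : Prop where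
  subset : T ⊆ V
  mem_iff : ∀ v ∈ V, v ∈ T ↔ ∀ u ∈ T, ¬G.Adj v u

/-- The vertices of `V` outside the closed neighbourhood of `J`. -/
def nonNeighborsIn (G : SimpleGraph β) (V : Finset β) (J : β) : Finset β :=
  {v ∈ V | v ≠ J ∧ ¬G.Adj J v}

/-- The edges of the subgraph of `G` induced on `V`. -/
def edgesIn (G : SimpleGraph β) (V : Finset β) : Finset (Sym2 β) :=
  {e ∈ V.sym2 | e ∈ G.edgeSet}

/-- The maximal independent sets of the subgraph of `G` induced on `V`. -/
def maxIndepSets (G : SimpleGraph β) (V : Finset β) : Finset (Finset β) :=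
  {T ∈ V.powerset | IsMaxIndepIn G V T}

/-- The generating sum of the maximal independent sets of `G` in `V`, vertices weighted by `c`. -/
def maxIndepSum {F : Type*} [CommSemiring F] (G : SimpleGraph β) (c : β → F) (V : Finset β) : F :=
  ∑ T ∈ maxIndepSets G V, ∏ v ∈ T, c v

lemma mem_maxIndepSets : T ∈ maxIndepSets G V ↔ IsMaxIndepIn G V T := by
  simpa [maxIndepSets] using IsMaxIndepIn.subset

lemma mem_nonNeighborsIn {v : β} : v ∈ nonNeighborsIn G V J ↔ v ∈ V ∧ v ≠ J ∧ ¬G.Adj J v := by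
  simp [nonNeighborsIn]

lemma mk_mem_edgesIn : s(J, K) ∈ edgesIn G V ↔ (J ∈ V ∧ K ∈ V) ∧ G.Adj J K := by
  simp [edgesIn]

lemma nonNeighborsIn_ssubset (hJ : J ∈ V) : nonNeighborsIn G V J ⊂ V :=
  Finset.filter_ssubset.2 ⟨J, hJ, fun h => h.1 rfl⟩

lemma IsMaxIndepIn.not_adj (h : IsMaxIndepIn G V T) (hJ : J ∈ T) (hK : K ∈ T) : ¬G.Adj J K :=
  (h.mem_iff J (h.subset hJ)).1 hJ K hK

lemma maxIndepSum_empty {F : Type*} [CommSemiring F] (c : β → F) : maxIndepSum G c ∅ = 1 := by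
  have hmax : IsMaxIndepIn G ∅ ∅ := ⟨subset_rfl, by simp⟩
  simp [maxIndepSum, maxIndepSets, Finset.filter_singleton, hmax]

lemma isMaxIndepIn_insert_iff [DecidableEq β] (hJ : J ∈ V) (hJT : J ∉ T) :
    IsMaxIndepIn G V (insert J T) ↔ IsMaxIndepIn G (nonNeighborsIn G V J) T := by
  constructor
  · intro h
    have hsub : T ⊆ nonNeighborsIn G V J := fun v hv => mem_nonNeighborsIn.2
      ⟨h.subset (Finset.mem_insert_of_mem hv), ne_of_mem_of_not_mem hv hJT,
        h.not_adj (Finset.mem_insert_self J T) (Finset.mem_insert_of_mem hv)⟩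
    refine ⟨hsub, fun v hv => ?_⟩
    obtain ⟨hvV, hvJ, hadj⟩ := mem_nonNeighborsIn.1 hv
    simpa [hvJ, G.adj_comm v J, hadj] using h.mem_iff v hvV
  · intro h
    have hT : ∀ v ∈ T, v ∈ V ∧ v ≠ J ∧ ¬G.Adj J v := fun v hv => mem_nonNeighborsIn.1 (h.subset hv)
    refine ⟨Finset.insert_subset hJ fun v hv => (hT v hv).1, fun v hvV => ?_⟩
    rcases eq_or_ne v J with rfl | hvJ
    · simpa using fun u hu => (hT u hu).2.2
    by_cases hadj : G.Adj J v
    · have hvT : v ∉ T := fun hv => (hT v hv).2.2 hadj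
      simp [hvJ, hvT, hadj.symm]
    · simpa [hvJ, G.adj_comm v J, hadj] using h.mem_iff v (mem_nonNeighborsIn.2 ⟨hvV, hvJ, hadj⟩)

lemma sum_maxIndep_mem {F : Type*} [CommSemiring F] (c : β → F) (hJ : J ∈ V) :
    ∑ T ∈ maxIndepSets G V with J ∈ T, ∏ v ∈ T, c v =
      c J * maxIndepSum G c (nonNeighborsIn G V J) := by
  rw [maxIndepSum, Finset.mul_sum]
  have notMem : ∀ {T}, IsMaxIndepIn G (nonNeighborsIn G V J) T → J ∉ T := fun h hJT =>
    (mem_nonNeighborsIn.1 (h.subset hJT)).2.1 rfl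
  refine Finset.sum_bij' (fun T _ => T.erase J) (fun T _ => insert J T) ?_ ?_ ?_ ?_ ?_
  · intro T hT
    obtain ⟨hmax, hJT⟩ := Finset.mem_filter.1 hT
    rw [mem_maxIndepSets, ← Finset.insert_erase hJT,
      isMaxIndepIn_insert_iff hJ (Finset.notMem_erase J T)] at hmax
    exact mem_maxIndepSets.2 hmax
  · intro T hT
    have hmax := mem_maxIndepSets.1 hT
    have hins := (isMaxIndepIn_insert_iff hJ (notMem hmax)).2 hmax
    exact Finset.mem_filter.2 ⟨mem_maxIndepSets.2 hins, Finset.mem_insert_self J T⟩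
  · exact fun T hT => Finset.insert_erase (Finset.mem_filter.1 hT).2
  · exact fun T hT => Finset.erase_insert (notMem (mem_maxIndepSets.1 hT))
  · exact fun T hT => (Finset.mul_prod_erase T c (Finset.mem_filter.1 hT).2).symm

lemma maxIndepSum_of_isolated {F : Type*} [CommSemiring F] (c : β → F) (hJ : J ∈ V)
    (hiso : ∀ K ∈ V, ¬G.Adj J K) :
    maxIndepSum G c V = c J * maxIndepSum G c (nonNeighborsIn G V J) := by
  rw [← sum_maxIndep_mem c hJ, maxIndepSum]
  congr 1
  refine (Finset.filter_true_of_mem fun T hT => ?_).symm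
  have hmax := mem_maxIndepSets.1 hT
  exact (hmax.mem_iff J hJ).2 fun u hu => hiso u (hmax.subset hu)

lemma maxIndepSum_of_pendant {F : Type*} [CommSemiring F] (c : β → F) (hJ : J ∈ V) (hK : K ∈ V)
    (hJK : G.Adj J K) (huniq : ∀ L ∈ V, G.Adj J L → L = K) :
    maxIndepSum G c V = c J * maxIndepSum G c (nonNeighborsIn G V J) +
      c K * maxIndepSum G c (nonNeighborsIn G V K) := by
  rw [← sum_maxIndep_mem c hJ, ← sum_maxIndep_mem c hK, maxIndepSum,
    ← Finset.sum_filter_add_sum_filter_not _ (J ∈ ·)]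
  congr 2
  refine Finset.filter_congr fun T hT => ?_
  have h := mem_maxIndepSets.1 hT
  rw [h.mem_iff J hJ]
  push Not
  exact ⟨fun ⟨L, hL, hadj⟩ => huniq L (h.subset hL) hadj ▸ hL, fun hKT => ⟨K, hKT, hJK⟩⟩

lemma edgesIn_of_isolated (hiso : ∀ K ∈ V, ¬G.Adj J K) :
    edgesIn G V = edgesIn G (nonNeighborsIn G V J) := by
  ext e
  induction e with | _ L M
  simp only [mk_mem_edgesIn, mem_nonNeighborsIn]
  refine and_congr_left fun hLM => ?_
  grind [G.adj_comm L M]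

lemma edgesIn_of_matched [DecidableEq β] (hJ : J ∈ V) (hK : K ∈ V) (hJK : G.Adj J K)
    (hJu : ∀ L ∈ V, G.Adj J L → L = K) (hKu : ∀ L ∈ V, G.Adj K L → L = J) :
    edgesIn G V = insert s(J, K) (edgesIn G (nonNeighborsIn G V J)) := by
  ext e
  induction e with | _ L M
  simp only [Finset.mem_insert, mk_mem_edgesIn, mem_nonNeighborsIn, Sym2.eq_iff]
  grind [G.adj_comm L M, G.adj_comm J K]

lemma nonNeighborsIn_eq_of_matched (hJK : G.Adj J K)
    (hJu : ∀ L ∈ V, G.Adj J L → L = K) (hKu : ∀ L ∈ V, G.Adj K L → L = J) :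
    nonNeighborsIn G V J = nonNeighborsIn G V K := by
  ext v
  simp only [mem_nonNeighborsIn]
  grind [G.adj_comm J K]

theorem maxIndepSum_inv_of_matching {F : Type*} [Field F] (y : β → F) (pairSum : Sym2 β → F)
    (hpair : ∀ J K, pairSum s(J, K) = y J + y K) (hy : ∀ v ∈ V, y v ≠ 0)
    (hmatch : ∀ J ∈ V, ∀ K ∈ V, ∀ L ∈ V, G.Adj J K → G.Adj J L → K = L) :
    maxIndepSum G (fun v => (y v)⁻¹) V = (∏ e ∈ edgesIn G V, pairSum e) / ∏ v ∈ V, y v := by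
  induction V using Finset.strongInduction with | H V ih
  rcases V.eq_empty_or_nonempty with rfl | ⟨J, hJ⟩
  · simp [maxIndepSum_empty, edgesIn]
  have hsub : nonNeighborsIn G V J ⊆ V := (nonNeighborsIn_ssubset hJ).subset
  have ih' := ih _ (nonNeighborsIn_ssubset (G := G) hJ) (fun v hv => hy v (hsub hv))
    fun A hA B hB C hC => hmatch A (hsub hA) B (hsub hB) C (hsub hC)
  by_cases hiso : ∀ K ∈ V, ¬G.Adj J K
  · have hV : nonNeighborsIn G V J = V.erase J := by
      ext v; simp only [mem_nonNeighborsIn, Finset.mem_erase]; grind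
    rw [maxIndepSum_of_isolated _ hJ hiso, ih', edgesIn_of_isolated hiso,
      ← Finset.mul_prod_erase V y hJ, hV, inv_mul_eq_div, div_div, mul_comm (y J)]
  · push Not at hiso
    obtain ⟨K, hK, hJK⟩ := hiso
    have hJu : ∀ L ∈ V, G.Adj J L → L = K := fun L hL h => hmatch J hJ L hL K hK h hJK
    have hKu : ∀ L ∈ V, G.Adj K L → L = J := fun L hL h => hmatch K hK L hL J hJ h hJK.symm
    have hV : nonNeighborsIn G V J = (V.erase J).erase K := by
      ext v; simp only [mem_nonNeighborsIn, Finset.mem_erase]; grind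
    have hnew : s(J, K) ∉ edgesIn G (nonNeighborsIn G V J) := by
      simp [mk_mem_edgesIn, mem_nonNeighborsIn]
    rw [maxIndepSum_of_pendant _ hJ hK hJK hJu, ← nonNeighborsIn_eq_of_matched hJK hJu hKu, ih',
      edgesIn_of_matched hJ hK hJK hJu hKu, Finset.prod_insert hnew, hpair,
      ← Finset.mul_prod_erase V y hJ,
      ← Finset.mul_prod_erase _ y (Finset.mem_erase.2 ⟨hJK.ne', hK⟩), ← hV]
    have hyJ := hy J hJ
    have hyK := hy K hK
    have hprod : ∏ v ∈ nonNeighborsIn G V J, y v ≠ 0 :=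
      Finset.prod_ne_zero_iff.2 fun v hv => hy v (hsub hv)
    field_simp
    ring

end MaximalIndependentSets

section NestedFamilies

variable {α : Type*} {r : α → α → Prop} {U V J K : Finset α} {T : Finset (Finset α)} {a b : α}

/-- `J` is closed downwards under `r`. -/
def IsDownClosed (r : α → α → Prop) (J : Finset α) : Prop := ∀ ⦃a b⦄, r a b → b ∈ J → a ∈ J

/-- An edge, inside `J`, of the comparability graph of `r`. -/
def ComparableIn (r : α → α → Prop) (J : Finset α) (a b : α) : Prop :=
  a ∈ J ∧ b ∈ J ∧ Relation.SymmGen r a b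

/-- `J` is nonempty and induces a connected subgraph of the comparability graph of `r`. -/
structure IsComparabilityConnected (r : α → α → Prop) (J : Finset α) : Prop where
  nonempty : J.Nonempty
  reachable : ∀ a ∈ J, ∀ b ∈ J, Relation.ReflTransGen (ComparableIn r J) a b

/-- A tube: a connected down-closed set, the abstract counterpart of a connected ideal. -/
structure IsTube (r : α → α → Prop) (J : Finset α) : Prop where
  isDownClosed : IsDownClosed r J
  isConnected : IsComparabilityConnected r J

/-- The connected component of `a` in the comparability graph of `r` restricted to `U`. -/
def component (r : α → α → Prop) (U : Finset α) (a : α) : Finset α :=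
  {b ∈ U | Relation.ReflTransGen (ComparableIn r U) a b}

/-- The graph on finite sets joining two sets that overlap without one containing the other. -/
def crossingGraph (α : Type*) : SimpleGraph (Finset α) where
  Adj J K := ¬Disjoint J K ∧ ¬J ⊆ K ∧ ¬K ⊆ J
  symm := ⟨fun _ _ h => ⟨fun hd => h.1 hd.symm, h.2.2, h.2.1⟩⟩
  loopless := ⟨fun _ h => h.2.1 subset_rfl⟩

/-- The tubes contained in `U`. -/
def tubesIn (r : α → α → Prop) (U : Finset α) : Finset (Finset α) := {J ∈ U.powerset | IsTube r J}

/-- `T` is a maximal family of pairwise noncrossing tubes contained in `U`. -/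
abbrev IsMaxNested (r : α → α → Prop) (U : Finset α) (T : Finset (Finset α)) : Prop :=
  IsMaxIndepIn (crossingGraph α) (tubesIn r U) T

lemma mem_tubesIn : J ∈ tubesIn r U ↔ J ⊆ U ∧ IsTube r J := by
  simp [tubesIn]

lemma not_crossing_of_subset (h : J ⊆ K) : ¬(crossingGraph α).Adj J K := fun hJK => hJK.2.1 h

lemma subset_or_subset_of_not_crossing (h : ¬(crossingGraph α).Adj J K) (haJ : a ∈ J)
    (haK : a ∈ K) : J ⊆ K ∨ K ⊆ J := by
  by_contra hsub
  rw [not_or] at hsub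
  exact h ⟨Finset.not_disjoint_iff.2 ⟨a, haJ, haK⟩, hsub⟩

lemma IsDownClosed.biUnion [DecidableEq α] (h : ∀ J ∈ T, IsDownClosed r J) :
    IsDownClosed r (T.biUnion id) := by
  intro a b hab hb
  obtain ⟨J, hJ, hbJ⟩ := Finset.mem_biUnion.1 hb
  exact Finset.mem_biUnion.2 ⟨J, hJ, h J hJ hab hbJ⟩

lemma exists_insert_isDownClosed [DecidableEq α] [IsWellFounded α r] (hU : IsDownClosed r U)
    (hV : IsDownClosed r V) (hUV : ¬U ⊆ V) : ∃ a ∈ U, a ∉ V ∧ IsDownClosed r (insert a V) := by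
  obtain ⟨a, ⟨haU, haV⟩, hmin⟩ :=
    (IsWellFounded.wf (r := r)).has_min {a | a ∈ U ∧ a ∉ V} (Finset.not_subset.1 hUV)
  refine ⟨a, haU, haV, fun b c hbc hc => ?_⟩
  rcases Finset.mem_insert.1 hc with rfl | hcV
  · by_contra hb
    exact hmin b ⟨hU hbc haU, fun hbV => hb (Finset.mem_insert_of_mem hbV)⟩ hbc
  · exact Finset.mem_insert_of_mem (hV hbc hcV)

lemma IsComparabilityConnected.subset_of_closed (hJ : IsComparabilityConnected r J)
    (hclosed : ∀ a ∈ J, ∀ b ∈ J, Relation.SymmGen r a b → a ∈ K → b ∈ K) (haJ : a ∈ J)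
    (haK : a ∈ K) : J ⊆ K := by
  intro b hb
  induction hJ.reachable a haJ b hb with
  | refl => exact haK
  | tail _ hstep ih => exact hclosed _ hstep.1 _ hstep.2.1 hstep.2.2 (ih hstep.1)

lemma component_subset : component r U a ⊆ U := Finset.filter_subset _ _

lemma mem_component_self (ha : a ∈ U) : a ∈ component r U a :=
  Finset.mem_filter.2 ⟨ha, .refl⟩

lemma mem_component_of_symmGen {c : α} (hb : b ∈ component r U a) (hc : c ∈ U)
    (hbc : Relation.SymmGen r b c) : c ∈ component r U a := by
  obtain ⟨hbU, hab⟩ := Finset.mem_filter.1 hb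
  exact Finset.mem_filter.2 ⟨hc, hab.tail ⟨hbU, hc, hbc⟩⟩

lemma isComparabilityConnected_component (ha : a ∈ U) :
    IsComparabilityConnected r (component r U a) := by
  have reach : ∀ b ∈ component r U a,
      Relation.ReflTransGen (ComparableIn r (component r U a)) a b := by
    intro b hb
    induction (Finset.mem_filter.1 hb).2 with
    | refl => exact .refl
    | tail hab hstep ih =>
      have hmem := Finset.mem_filter.2 ⟨hstep.1, hab⟩
      exact (ih hmem).tail ⟨hmem, hb, hstep.2.2⟩
  have : Std.Symm (ComparableIn r (component r U a)) := ⟨fun _ _ h => ⟨h.2.1, h.1, h.2.2.symm⟩⟩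
  exact ⟨⟨a, mem_component_self ha⟩, fun b hb c hc => (symm (reach b hb)).trans (reach c hc)⟩

lemma isTube_component (hU : IsDownClosed r U) (ha : a ∈ U) : IsTube r (component r U a) where
  isDownClosed _ _ hbc hc :=
    mem_component_of_symmGen hc (hU hbc (component_subset hc)) (.of_rel_symm hbc)
  isConnected := isComparabilityConnected_component ha

lemma IsComparabilityConnected.subset_component (hK : IsComparabilityConnected r K) (hKU : K ⊆ U)
    (hbK : b ∈ K) (hb : b ∈ component r U a) : K ⊆ component r U a :=
  hK.subset_of_closed (fun _ _ _ hd hcd hc => mem_component_of_symmGen hc (hKU hd) hcd) hbK hb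

lemma component_not_crossing (hK : IsComparabilityConnected r K) (hKU : K ⊆ U) :
    ¬(crossingGraph α).Adj (component r U a) K := by
  intro h
  obtain ⟨b, hb, hbK⟩ := Finset.not_disjoint_iff.1 h.1
  exact h.2.2 (hK.subset_component hKU hbK hb)

lemma IsComparabilityConnected.subset_of_maximal [DecidableEq α]
    (hJ : IsComparabilityConnected r J) (hdown : ∀ K ∈ T, IsDownClosed r K)
    (hnc : ∀ K ∈ T, ∀ L ∈ T, ¬(crossingGraph α).Adj K L) (hK : Maximal (· ∈ T) K)
    (hJT : J ⊆ T.biUnion id) (haJ : a ∈ J) (haK : a ∈ K) : J ⊆ K := by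
  refine hJ.subset_of_closed (fun b _ c hc hbc hbK => ?_) haJ haK
  rcases hbc with hbc | hcb
  · obtain ⟨L, hL, hcL⟩ := Finset.mem_biUnion.1 (hJT hc)
    have hbL : b ∈ L := hdown L hL hbc hcL
    rcases subset_or_subset_of_not_crossing (hnc K hK.prop L hL) hbK hbL with hKL | hLK
    · exact hK.le_of_ge hL hKL hcL
    · exact hLK hcL
  · exact hdown K hK.prop hcb hbK

namespace IsMaxNested

lemma subset_of_mem (hT : IsMaxNested r U T) (hJ : J ∈ T) : J ⊆ U :=
  (mem_tubesIn.1 (hT.subset hJ)).1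

lemma isTube_of_mem (hT : IsMaxNested r U T) (hJ : J ∈ T) : IsTube r J :=
  (mem_tubesIn.1 (hT.subset hJ)).2

lemma component_mem (hT : IsMaxNested r U T) (hV : IsDownClosed r V) (hVU : V ⊆ U) (ha : a ∈ V)
    (hTV : ∀ K ∈ T, K ⊆ V ∨ component r V a ⊆ K) : component r V a ∈ T := by
  refine (hT.mem_iff _ (mem_tubesIn.2
    ⟨component_subset.trans hVU, isTube_component hV ha⟩)).2 fun K hK => ?_
  rcases hTV K hK with hKV | hle
  · exact component_not_crossing (hT.isTube_of_mem hK).isConnected hKV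
  · exact not_crossing_of_subset hle

variable [DecidableEq α]

lemma component_notMem (hT : IsMaxNested r (U.erase a) T) (ha : a ∈ U) :
    component r U a ∉ T := fun h =>
  Finset.notMem_erase a U (hT.subset_of_mem h (mem_component_self ha))

lemma maximal_component (hT : IsMaxNested r (U.erase a) T) (ha : a ∈ U) :
    Maximal (· ∈ insert (component r U a) T) (component r U a) := by
  refine ⟨Finset.mem_insert_self _ _, fun K hK hle => ?_⟩
  rcases Finset.mem_insert.1 hK with rfl | hK
  · exact subset_rfl
  · exact absurd (hT.subset_of_mem hK (hle (mem_component_self ha))) (Finset.notMem_erase a U)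

lemma not_subset_biUnion_erase (hT : IsMaxNested r U T) (hJ : Maximal (· ∈ T) J) :
    ¬J ⊆ (T.erase J).biUnion id := by
  intro hsub
  obtain ⟨a, haJ⟩ := (hT.isTube_of_mem hJ.prop).isConnected.nonempty
  obtain ⟨L, hL, haL⟩ := Finset.mem_biUnion.1 (hsub haJ)
  obtain ⟨K, hLK, hK⟩ := Finset.exists_le_maximal (T.erase J) hL
  have hKT := Finset.mem_of_mem_erase hK.prop
  have hJK : J ⊆ K := (hT.isTube_of_mem hJ.prop).isConnected.subset_of_maximal
    (fun M hM => (hT.isTube_of_mem (Finset.mem_of_mem_erase hM)).isDownClosed)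
    (fun M hM N hN => hT.not_adj (Finset.mem_of_mem_erase hM) (Finset.mem_of_mem_erase hN))
    hK hsub haJ (hLK haL)
  exact Finset.ne_of_mem_erase hK.prop (hJ.eq_of_le hKT hJK).symm

variable [IsWellFounded α r]

lemma biUnion_eq (hT : IsMaxNested r U T) (hU : IsDownClosed r U) : T.biUnion id = U := by
  have hsub : T.biUnion id ⊆ U := Finset.biUnion_subset.2 fun J hJ => hT.subset_of_mem hJ
  refine hsub.antisymm (by_contra fun hne => ?_)
  obtain ⟨a, haU, haT, hdown⟩ := exists_insert_isDownClosed hU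
    (IsDownClosed.biUnion fun J hJ => (hT.isTube_of_mem hJ).isDownClosed) hne
  have hself : a ∈ insert a (T.biUnion id) := Finset.mem_insert_self _ _
  have hmem := hT.component_mem hdown (Finset.insert_subset haU hsub) hself
    fun K hK => .inl ((Finset.subset_biUnion_of_mem id hK).trans (Finset.subset_insert _ _))
  exact haT (Finset.mem_biUnion.2 ⟨_, hmem, mem_component_self hself⟩)

lemma component_subset_of_mem (hT : IsMaxNested r (U.erase a) T)
    (hUa : IsDownClosed r (U.erase a)) (ha : a ∈ U) (hK : IsTube r K) (haK : a ∈ K)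
    (hnc : ∀ L ∈ T, ¬(crossingGraph α).Adj K L) : component r U a ⊆ K := by
  have notMem : ∀ L ∈ T, a ∉ L := fun L hL haL => Finset.notMem_erase a U (hT.subset_of_mem hL haL)
  refine (isComparabilityConnected_component ha).subset_of_maximal (T := insert K T)
    ?_ ?_ ⟨Finset.mem_insert_self K T, ?_⟩ ?_ (mem_component_self ha) haK
  · exact (Finset.forall_mem_insert _ _ _).2
      ⟨hK.isDownClosed, fun L hL => (hT.isTube_of_mem hL).isDownClosed⟩
  · intro L hL M hM
    rcases Finset.mem_insert.1 hL with rfl | hLT <;> rcases Finset.mem_insert.1 hM with rfl | hMT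
    · exact SimpleGraph.irrefl _
    · exact hnc M hMT
    · exact fun h => hnc L hLT h.symm
    · exact hT.not_adj hLT hMT
  · intro L hL hKL
    rcases Finset.mem_insert.1 hL with rfl | hL
    · exact subset_rfl
    · exact absurd (hKL haK) (notMem L hL)
  · rw [Finset.biUnion_insert, hT.biUnion_eq hUa, id]
    grind [component_subset (r := r) (U := U) (a := a)]

lemma insert_component (hT : IsMaxNested r (U.erase a) T) (hU : IsDownClosed r U)
    (hUa : IsDownClosed r (U.erase a)) (ha : a ∈ U) :
    IsMaxNested r U (insert (component r U a) T) := by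
  have hTU : ∀ K ∈ T, K ⊆ U := fun K hK => (hT.subset_of_mem hK).trans (Finset.erase_subset a U)
  have hnc : ∀ K ∈ T, ¬(crossingGraph α).Adj (component r U a) K := fun K hK =>
    component_not_crossing (hT.isTube_of_mem hK).isConnected (hTU K hK)
  refine ⟨Finset.insert_subset (mem_tubesIn.2 ⟨component_subset, isTube_component hU ha⟩)
    fun K hK => mem_tubesIn.2 ⟨hTU K hK, hT.isTube_of_mem hK⟩, fun K hK => ⟨fun hKT => ?_, ?_⟩⟩
  · rw [Finset.forall_mem_insert]
    rcases Finset.mem_insert.1 hKT with rfl | hKT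
    · exact ⟨SimpleGraph.irrefl _, hnc⟩
    · exact ⟨fun h => hnc K hKT h.symm, fun L hL => hT.not_adj hKT hL⟩
  · rw [Finset.forall_mem_insert]
    rintro ⟨-, hKT⟩
    obtain ⟨hKU, hK⟩ := mem_tubesIn.1 hK
    by_cases haK : a ∈ K
    · have hle := hT.component_subset_of_mem hUa ha hK haK hKT
      have hge := hK.isConnected.subset_component hKU haK (mem_component_self ha)
      exact Finset.mem_insert.2 (.inl (hge.antisymm hle))
    · exact Finset.mem_insert_of_mem ((hT.mem_iff K
        (mem_tubesIn.2 ⟨Finset.subset_erase.2 ⟨hKU, haK⟩, hK⟩)).2 hKT)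

lemma exists_biUnion_erase_eq (hT : IsMaxNested r U T) (hU : IsDownClosed r U)
    (hJ : Maximal (· ∈ T) J) :
    ∃ a ∈ U, (T.erase J).biUnion id = U.erase a ∧ component r U a = J := by
  set V := (T.erase J).biUnion id with hV
  have hVdown : IsDownClosed r V := IsDownClosed.biUnion fun K hK =>
    (hT.isTube_of_mem (Finset.mem_of_mem_erase hK)).isDownClosed
  have hUJV : U = J ∪ V := by
    rw [← hT.biUnion_eq hU, ← Finset.insert_erase hJ.prop, Finset.biUnion_insert]; rfl
  obtain ⟨a, haJ, haV, hdown⟩ := exists_insert_isDownClosed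
    (hT.isTube_of_mem hJ.prop).isDownClosed hVdown (hT.not_subset_biUnion_erase hJ)
  have haU : a ∈ U := hT.subset_of_mem hJ.prop haJ
  have hself : a ∈ insert a V := Finset.mem_insert_self a V
  have hsubU : insert a V ⊆ U := Finset.insert_subset haU (hUJV ▸ Finset.subset_union_right)
  have hCJ : component r (insert a V) a ⊆ J :=
    (isComparabilityConnected_component hself).subset_of_maximal
      (fun K hK => (hT.isTube_of_mem hK).isDownClosed) (fun K hK L hL => hT.not_adj hK hL) hJ
      (hT.biUnion_eq hU ▸ component_subset.trans hsubU) (mem_component_self hself) haJ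
  have hCT : component r (insert a V) a ∈ T := hT.component_mem hdown hsubU hself fun K hK => by
    rcases eq_or_ne K J with rfl | hne
    · exact .inr hCJ
    · exact .inl ((Finset.subset_biUnion_of_mem id (Finset.mem_erase.2 ⟨hne, hK⟩)).trans
        (Finset.subset_insert a V))
  have hCeq : component r (insert a V) a = J := by
    by_contra hne
    exact haV (Finset.mem_biUnion.2
      ⟨_, Finset.mem_erase.2 ⟨hne, hCT⟩, mem_component_self hself⟩)
  have hUV : U = insert a V := hsubU.antisymm'
    (hUJV ▸ Finset.union_subset (hCeq ▸ component_subset) (Finset.subset_insert a V))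
  exact ⟨a, haU, by rw [hUV, Finset.erase_insert haV], hUV ▸ hCeq⟩

lemma exists_erase_of_maximal (hT : IsMaxNested r U T) (hU : IsDownClosed r U)
    (hJ : Maximal (· ∈ T) J) :
    ∃ a ∈ U, IsDownClosed r (U.erase a) ∧ component r U a = J ∧
      IsMaxNested r (U.erase a) (T.erase J) := by
  obtain ⟨a, haU, hV, hcomp⟩ := hT.exists_biUnion_erase_eq hU hJ
  refine ⟨a, haU, hV ▸ IsDownClosed.biUnion fun K hK =>
    (hT.isTube_of_mem (Finset.mem_of_mem_erase hK)).isDownClosed, hcomp, fun K hK => ?_,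
    fun K hK => ⟨fun hKT L hL =>
      hT.not_adj (Finset.mem_of_mem_erase hKT) (Finset.mem_of_mem_erase hL), fun hKT => ?_⟩⟩
  · exact mem_tubesIn.2 ⟨hV ▸ Finset.subset_biUnion_of_mem id hK,
      hT.isTube_of_mem (Finset.mem_of_mem_erase hK)⟩
  · obtain ⟨hKU, hK⟩ := mem_tubesIn.1 hK
    obtain ⟨hKU, haK⟩ := Finset.subset_erase.1 hKU
    refine Finset.mem_erase.2 ⟨?_, (hT.mem_iff K (mem_tubesIn.2 ⟨hKU, hK⟩)).2 fun L hL => ?_⟩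
    · rintro rfl
      exact haK (hcomp ▸ mem_component_self haU)
    · rcases eq_or_ne L J with rfl | hne
      · exact fun h => component_not_crossing (a := a) hK.isConnected hKU (hcomp ▸ h.symm)
      · exact hKT L (Finset.mem_erase.2 ⟨hne, hL⟩)

lemma eq_of_insert_component_eq {T' : Finset (Finset α)} (hT : IsMaxNested r (U.erase a) T)
    (hT' : IsMaxNested r (U.erase b) T') (hUa : IsDownClosed r (U.erase a))
    (hUb : IsDownClosed r (U.erase b)) (ha : a ∈ U) (hb : b ∈ U)
    (hcomp : component r U a = component r U b)
    (hins : insert (component r U a) T = insert (component r U b) T') : a = b ∧ T = T' := by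
  have hTT' : T = T' := by
    rw [← Finset.erase_insert (hT.component_notMem ha), hins, hcomp,
      Finset.erase_insert (hT'.component_notMem hb)]
  subst hTT'
  have herase : U.erase a = U.erase b := by rw [← hT.biUnion_eq hUa, hT'.biUnion_eq hUb]
  exact ⟨(Finset.erase_inj U ha).1 herase, rfl⟩

end IsMaxNested

section Sums

/-- The sum, over all maximal nested families `T` of tubes in `U`, of the product of the
reciprocals of the total weights of the members of `T`. -/
def nestedSum {F : Type*} [Field F] (r : α → α → Prop) (y : α → F) (U : Finset α) : F :=
  maxIndepSum (crossingGraph α) (fun J => (∑ a ∈ J, y a)⁻¹) (tubesIn r U)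

lemma nestedSum_empty {F : Type*} [Field F] (y : α → F) : nestedSum r y ∅ = 1 := by
  have htubes : tubesIn r (∅ : Finset α) = ∅ := Finset.eq_empty_of_forall_notMem fun J hJ => by
    obtain ⟨hsub, hJ⟩ := mem_tubesIn.1 hJ
    exact Finset.not_nonempty_empty (Finset.subset_empty.1 hsub ▸ hJ.isConnected.nonempty)
  rw [nestedSum, htubes, maxIndepSum_empty]

variable [IsWellFounded α r]

/-- Deleting a maximal member of a nested family amounts to deleting an element of `U`. -/
lemma sum_erase_maximal_eq_sum_erase [DecidableEq α] {M : Type*} [AddCommMonoid M]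
    (hU : IsDownClosed r U) (f : Finset (Finset α) → M) :
    ∑ T ∈ maxIndepSets (crossingGraph α) (tubesIn r U), ∑ J ∈ T with Maximal (· ∈ T) J,
        f (T.erase J) =
      ∑ a ∈ U with IsDownClosed r (U.erase a),
        ∑ T ∈ maxIndepSets (crossingGraph α) (tubesIn r (U.erase a)), f T := by
  rw [Finset.sum_sigma', Finset.sum_sigma', eq_comm]
  refine Finset.sum_bij
    (fun p _ => ⟨insert (component r U p.1) p.2, component r U p.1⟩) ?_ ?_ ?_ ?_ <;>
    simp only [Finset.mem_sigma, Finset.mem_filter, mem_maxIndepSets]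
  · rintro ⟨a, T⟩ ⟨⟨ha, hUa⟩, hT⟩
    exact ⟨IsMaxNested.insert_component hT hU hUa ha, Finset.mem_insert_self _ _,
      IsMaxNested.maximal_component hT ha⟩
  · rintro ⟨a, T⟩ ⟨⟨ha, hUa⟩, hT⟩ ⟨b, T'⟩ ⟨⟨hb, hUb⟩, hT'⟩ heq
    obtain ⟨hins, hcomp⟩ : _ ∧ component r U a = component r U b := by simpa using heq
    obtain ⟨rfl, rfl⟩ :=
      IsMaxNested.eq_of_insert_component_eq hT hT' hUa hUb ha hb hcomp hins
    rfl
  · rintro ⟨T, J⟩ ⟨hT, hJT, hJ⟩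
    obtain ⟨a, ha, hUa, hcomp, hTJ⟩ := IsMaxNested.exists_erase_of_maximal hT hU hJ
    exact ⟨⟨a, T.erase J⟩, ⟨⟨ha, hUa⟩, hTJ⟩, by simp only [hcomp, Finset.insert_erase hJT]⟩
  · rintro ⟨a, T⟩ ⟨⟨ha, -⟩, hT⟩
    simp only [Finset.erase_insert (IsMaxNested.component_notMem hT ha)]

lemma IsMaxNested.sum_eq_sum_maximal {M : Type*} [AddCommMonoid M] (hT : IsMaxNested r U T)
    (hU : IsDownClosed r U) (y : α → M) :
    ∑ a ∈ U, y a = ∑ J ∈ T with Maximal (· ∈ T) J, ∑ a ∈ J, y a := by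
  rw [← Finset.sum_biUnion]
  · congr 1
    refine Finset.Subset.antisymm (fun a haU => ?_) (Finset.biUnion_subset.2 fun J hJ =>
      hT.subset_of_mem (Finset.mem_filter.1 hJ).1)
    rw [← hT.biUnion_eq hU] at haU
    obtain ⟨L, hL, haL⟩ := Finset.mem_biUnion.1 haU
    obtain ⟨J, hLJ, hJ⟩ := Finset.exists_le_maximal T hL
    exact Finset.mem_biUnion.2 ⟨J, Finset.mem_filter.2 ⟨hJ.prop, hJ⟩, hLJ haL⟩
  · intro J hJ K hK hne
    have hJ := (Finset.mem_filter.1 hJ).2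
    have hK := (Finset.mem_filter.1 hK).2
    refine Finset.disjoint_left.2 fun a haJ haK => hne ?_
    rcases subset_or_subset_of_not_crossing (hT.not_adj hJ.prop hK.prop) haJ haK with h | h
    · exact hJ.eq_of_le hK.prop h
    · exact (hK.eq_of_le hJ.prop h).symm

theorem sum_mul_nestedSum [DecidableEq α] {F : Type*} [Field F] (y : α → F)
    (hU : IsDownClosed r U) (hy : ∀ J ∈ tubesIn r U, ∑ a ∈ J, y a ≠ 0) :
    (∑ a ∈ U, y a) * nestedSum r y U =
      ∑ a ∈ U with IsDownClosed r (U.erase a), nestedSum r y (U.erase a) := by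
  rw [nestedSum, maxIndepSum, Finset.mul_sum]
  refine Eq.trans (Finset.sum_congr rfl fun T hT => ?_)
    (sum_erase_maximal_eq_sum_erase hU fun T => ∏ K ∈ T, (∑ a ∈ K, y a)⁻¹)
  have hT : IsMaxNested r U T := mem_maxIndepSets.1 hT
  rw [hT.sum_eq_sum_maximal hU y, Finset.sum_mul]
  refine Finset.sum_congr rfl fun J hJ => ?_
  have hJT := (Finset.mem_filter.1 hJ).1
  rw [← Finset.mul_prod_erase T _ hJT, mul_inv_cancel_left₀ (hy J (hT.subset hJT))]

end Sums

end NestedFamilies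

section LowerEnumerations

variable {α : Type*} {r : α → α → Prop} {U : Finset α} {k : ℕ} {a : α}

lemma injective_snoc_iff {g : Fin k → α} :
    Function.Injective (Fin.snoc g a : Fin (k + 1) → α) ↔
      Function.Injective g ∧ a ∉ Set.range g := by
  simp only [Function.Injective, Fin.forall_fin_succ', Fin.snoc_castSucc, Fin.snoc_last,
    Fin.castSucc_inj, Set.mem_range]
  grind

variable [DecidableEq α]

/-- The set of the values of `f` up to and including index `m`. -/
def prefixSet (f : Fin k → α) (m : Fin k) : Finset α := (Finset.Iic m).image f

/-- `f` lists the elements of `U` without repetition, every initial segment being down-closed. -/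
structure IsLowerEnum (r : α → α → Prop) (U : Finset α) (f : Fin k → α) : Prop where
  injective : Function.Injective f
  image_univ : Finset.univ.image f = U
  isDownClosed_prefixSet : ∀ m, IsDownClosed r (prefixSet f m)

/-- The lower enumerations of `U` by `Fin k`; there are none unless `U` has `k` elements. -/
def lowerEnums (r : α → α → Prop) (U : Finset α) (k : ℕ) : Finset (Fin k → α) :=
  {f ∈ Fintype.piFinset fun _ : Fin k => U | IsLowerEnum r U f}

lemma mem_lowerEnums {f : Fin k → α} : f ∈ lowerEnums r U k ↔ IsLowerEnum r U f := by
  refine Finset.mem_filter.trans (and_iff_right_of_imp fun hf => Fintype.mem_piFinset.2 fun i => ?_)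
  exact hf.image_univ ▸ Finset.mem_image_of_mem f (Finset.mem_univ i)

lemma prefixSet_last (f : Fin (k + 1) → α) :
    prefixSet f (Fin.last k) = Finset.univ.image f := by
  rw [prefixSet, ← Fin.top_eq_last, Finset.Iic_top]

lemma prefixSet_snoc_castSucc (g : Fin k → α) (a : α) (m : Fin k) :
    prefixSet (Fin.snoc g a : Fin (k + 1) → α) m.castSucc = prefixSet g m := by
  rw [prefixSet, ← Fin.finsetImage_castSucc_Iic, Finset.image_image, prefixSet]
  exact Finset.image_congr fun i _ => Fin.snoc_castSucc (α := fun _ => α) a g i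

lemma image_univ_snoc (g : Fin k → α) (a : α) :
    Finset.univ.image (Fin.snoc g a : Fin (k + 1) → α) = insert a (Finset.univ.image g) := by
  rw [← Finset.coe_inj]
  push_cast
  simpa only [Set.image_univ] using Fin.range_snoc g a

lemma IsLowerEnum.isDownClosed {f : Fin k → α} (hf : IsLowerEnum r U f) : IsDownClosed r U := by
  rw [← hf.image_univ]
  cases k with
  | zero => intro a b _ hb; simp at hb
  | succ k => exact prefixSet_last f ▸ hf.isDownClosed_prefixSet (Fin.last k)

lemma isLowerEnum_snoc_iff (hU : IsDownClosed r U) {g : Fin k → α} :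
    IsLowerEnum r U (Fin.snoc g a : Fin (k + 1) → α) ↔ a ∈ U ∧ IsLowerEnum r (U.erase a) g := by
  constructor
  · rintro ⟨hinj, himage, hdown⟩
    obtain ⟨hg, ha⟩ := injective_snoc_iff.1 hinj
    rw [image_univ_snoc] at himage
    refine ⟨himage ▸ Finset.mem_insert_self _ _, hg, ?_, fun m => ?_⟩
    · rw [← himage, Finset.erase_insert (by simpa using ha)]
    · rw [← prefixSet_snoc_castSucc g a]
      exact hdown m.castSucc
  · rintro ⟨ha, hg⟩
    have himage : Finset.univ.image (Fin.snoc g a : Fin (k + 1) → α) = U := by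
      rw [image_univ_snoc, hg.image_univ, Finset.insert_erase ha]
    refine ⟨injective_snoc_iff.2 ⟨hg.injective, ?_⟩, himage,
      Fin.lastCases ?_ fun m => ?_⟩
    · rintro ⟨i, rfl⟩
      exact Finset.notMem_erase (g i) U
        (hg.image_univ ▸ Finset.mem_image_of_mem g (Finset.mem_univ i))
    · rwa [prefixSet_last, himage]
    · rw [prefixSet_snoc_castSucc]
      exact hg.isDownClosed_prefixSet m

lemma sum_lowerEnums_succ {M : Type*} [AddCommMonoid M] (hU : IsDownClosed r U)
    (F : (Fin (k + 1) → α) → M) :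
    ∑ f ∈ lowerEnums r U (k + 1), F f =
      ∑ a ∈ U with IsDownClosed r (U.erase a),
        ∑ g ∈ lowerEnums r (U.erase a) k, F (Fin.snoc g a) := by
  rw [Finset.sum_sigma']
  refine Finset.sum_bij' (fun f _ => ⟨f (Fin.last k), Fin.init f⟩) (fun p _ => Fin.snoc p.2 p.1)
    ?_ ?_ ?_ ?_ ?_
  · intro f hf
    rw [mem_lowerEnums, ← Fin.snoc_init_self f, isLowerEnum_snoc_iff hU] at hf
    simpa only [Finset.mem_sigma, Finset.mem_filter, mem_lowerEnums] using
      ⟨⟨hf.1, hf.2.isDownClosed⟩, hf.2⟩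
  · intro p hp
    simp only [Finset.mem_sigma, Finset.mem_filter, mem_lowerEnums] at hp
    exact mem_lowerEnums.2 ((isLowerEnum_snoc_iff hU).2 ⟨hp.1.1, hp.2⟩)
  · exact fun f _ => Fin.snoc_init_self f
  · intro p _
    simp
  · exact fun f _ => by rw [Fin.snoc_init_self]

theorem sum_lowerEnums_eq_nestedSum [IsWellFounded α r] {F : Type*} [Field F] (y : α → F)
    (hU : IsDownClosed r U) (hcard : U.card = k)
    (hy : ∀ J ⊆ U, IsDownClosed r J → J.Nonempty → ∑ a ∈ J, y a ≠ 0) :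
    ∑ f ∈ lowerEnums r U k, ∏ m, (∑ a ∈ prefixSet f m, y a)⁻¹ = nestedSum r y U := by
  induction k generalizing U with
  | zero =>
    obtain rfl := Finset.card_eq_zero.1 hcard
    have hnil : IsLowerEnum r ∅ (default : Fin 0 → α) :=
      ⟨Function.injective_of_subsingleton _, rfl, fun m => m.elim0⟩
    simp [nestedSum_empty, lowerEnums, Finset.filter_singleton, hnil]
  | succ k ih =>
    have hUne : ∑ a ∈ U, y a ≠ 0 := hy U subset_rfl hU (Finset.card_pos.1 (by omega))
    rw [← mul_right_inj' hUne, sum_mul_nestedSum y hU fun J hJ =>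
      have hJ := mem_tubesIn.1 hJ
      hy J hJ.1 hJ.2.isDownClosed hJ.2.isConnected.nonempty, sum_lowerEnums_succ hU,
      Finset.mul_sum]
    refine Finset.sum_congr rfl fun a ha => ?_
    obtain ⟨haU, hUa⟩ := Finset.mem_filter.1 ha
    rw [← ih hUa (by rw [Finset.card_erase_of_mem haU, hcard, Nat.add_sub_cancel])
      fun J hJ => hy J (hJ.trans (Finset.erase_subset a U)), Finset.mul_sum]
    refine Finset.sum_congr rfl fun g hg => ?_
    have hfull : prefixSet (Fin.snoc g a : Fin (k + 1) → α) (Fin.last k) = U := by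
      rw [prefixSet_last, image_univ_snoc, (mem_lowerEnums.1 hg).image_univ,
        Finset.insert_erase haU]
    simp only [Fin.prod_univ_castSucc, prefixSet_snoc_castSucc, hfull]
    rw [mul_comm (∏ m, _), mul_inv_cancel_left₀ hUne]

end LowerEnumerations

section SignedPosets

variable {n : ℕ} {P : Set (Fin n → ℝ)} {a b c : SIdx n} {J K U V : Finset (SIdx n)}

/-! ### Signed indices and roots -/

lemma negS_negS (a : SIdx n) : negS (negS a) = a := by
  simp [negS]

lemma negS_ne_self (a : SIdx n) : negS a ≠ a := fun h => Bool.not_ne_self a.1 (congrArg Prod.fst h)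

lemma eq_or_eq_negS_of_snd_eq (h : a.2 = b.2) : a = b ∨ a = negS b := by
  rcases a with ⟨s, i⟩
  rcases b with ⟨t, j⟩
  obtain rfl : i = j := h
  cases s <;> cases t <;> simp [negS]

lemma rsgn_not (s : Bool) : rsgn (!s) = -rsgn s := by
  cases s <;> simp [rsgn]

lemma rsgn_nonneg_iff {s : Bool} : 0 ≤ rsgn s ↔ s = true := by
  cases s <;> simp [rsgn]

lemma abs_rsgn (s : Bool) : |rsgn s| = 1 := by
  cases s <;> simp [rsgn]

lemma vS_negS (a : SIdx n) : vS (negS a) = -vS a := by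
  simp [vS, negS, rsgn_not]

lemma vS_true (i : Fin n) : vS (true, i) = stdB n i := by
  simp [vS, rsgn]

lemma vS_apply (a : SIdx n) (i : Fin n) : vS a i = if i = a.2 then rsgn a.1 else 0 := by
  simp [vS, stdB, Pi.single_apply]

lemma dotR_eq_dotProduct (x y : Fin n → ℝ) : dotR x y = dotProduct x y := rfl

lemma dotR_vS (x : Fin n → ℝ) (a : SIdx n) : dotR x (vS a) = rsgn a.1 * x a.2 := by
  simp [dotR, vS_apply, mul_comm]

lemma mem_BnRoots_iff_lt {α : Fin n → ℝ} :
    α ∈ BnRoots n ↔ (∃ a b : SIdx n, a.2 < b.2 ∧ α = vS a - vS b) ∨ ∃ a : SIdx n, α = vS a := by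
  refine or_congr ⟨?_, ?_⟩ ⟨?_, ?_⟩
  · rintro ⟨i, j, hij, s, t, rfl⟩
    exact ⟨(s, i), (!t, j), hij, by simp [vS, rsgn_not]⟩
  · rintro ⟨⟨s, i⟩, ⟨t, j⟩, hij, rfl⟩
    exact ⟨i, j, hij, s, !t, by simp [vS, rsgn_not, sub_eq_add_neg]⟩
  · rintro ⟨i, s, rfl⟩
    exact ⟨(s, i), rfl⟩
  · rintro ⟨a, rfl⟩
    exact ⟨a.2, a.1, rfl⟩

lemma mem_BnRoots_iff {α : Fin n → ℝ} :
    α ∈ BnRoots n ↔ (∃ a b : SIdx n, a.2 ≠ b.2 ∧ α = vS a - vS b) ∨ ∃ a : SIdx n, α = vS a := by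
  rw [mem_BnRoots_iff_lt]
  refine or_congr_left ⟨fun ⟨a, b, hab, h⟩ => ⟨a, b, hab.ne, h⟩, ?_⟩
  rintro ⟨a, b, hab, rfl⟩
  rcases hab.lt_or_gt with h | h
  · exact ⟨a, b, h, rfl⟩
  · exact ⟨negS b, negS a, h, by rw [vS_negS, vS_negS]; abel⟩

lemma vS_mem_BnRoots (a : SIdx n) : vS a ∈ BnRoots n := mem_BnRoots_iff.2 (.inr ⟨a, rfl⟩)

lemma vS_sub_vS_mem_BnRoots (h : a.2 ≠ b.2) : vS a - vS b ∈ BnRoots n :=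
  mem_BnRoots_iff.2 (.inl ⟨a, b, h, rfl⟩)

lemma abs_apply_le_one_of_mem_BnRoots {α : Fin n → ℝ} (h : α ∈ BnRoots n) (i : Fin n) :
    |α i| ≤ 1 := by
  rcases mem_BnRoots_iff.1 h with ⟨a, b, hab, rfl⟩ | ⟨a, rfl⟩
  · rw [Pi.sub_apply, vS_apply, vS_apply]
    split_ifs with ha hb
    · exact absurd (ha.symm.trans hb) hab
    all_goals simp [abs_rsgn]
  · rw [vS_apply]
    split_ifs <;> simp [abs_rsgn]

lemma sum_Iic_vS (m : Fin n) (a : SIdx n) :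
    ∑ i ∈ Finset.Iic m, vS a i = if a.2 ≤ m then rsgn a.1 else 0 := by
  simp [vS_apply]

lemma sum_Iic_nonneg_of_mem_BnPos {α : Fin n → ℝ} (hα : α ∈ BnPos n) (m : Fin n) :
    0 ≤ ∑ i ∈ Finset.Iic m, α i := by
  rcases hα with ⟨i, j, hij, t, rfl⟩ | ⟨i, rfl⟩
  · have hroot : stdB n i + rsgn t • stdB n j = vS (true, i) + vS (t, j) := by simp [vS, rsgn]
    rw [hroot]
    simp only [Pi.add_apply, Finset.sum_add_distrib, sum_Iic_vS]
    by_cases hj : j ≤ m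
    · rw [if_pos (hij.le.trans hj), if_pos hj]
      cases t <;> norm_num [rsgn]
    · rw [if_neg hj]
      split_ifs <;> norm_num [rsgn]
  · rw [← vS_true, sum_Iic_vS]
    split_ifs <;> norm_num [rsgn]

lemma mem_BnPos_of_sum_Iic_nonneg {α : Fin n → ℝ} (hα : α ∈ BnRoots n)
    (h : ∀ m, 0 ≤ ∑ i ∈ Finset.Iic m, α i) : α ∈ BnPos n := by
  rcases mem_BnRoots_iff_lt.1 hα with ⟨⟨s, i⟩, ⟨t, j⟩, hij, rfl⟩ | ⟨⟨s, i⟩, rfl⟩ <;>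
    specialize h i
  · simp only [Pi.sub_apply, Finset.sum_sub_distrib, sum_Iic_vS, le_refl, if_true,
      if_neg (not_le.2 hij), sub_zero, rsgn_nonneg_iff] at h
    subst h
    exact .inl ⟨i, j, hij, !t, by rw [vS_true]; simp [vS, rsgn_not, sub_eq_add_neg]⟩
  · simp only [sum_Iic_vS, le_refl, if_true, rsgn_nonneg_iff] at h
    subst h
    exact .inr ⟨i, vS_true i⟩

/-! ### The Fischer order -/

/-- The Fischer order of `P` restricted to `±[n]`. -/
def fischerLT (P : Set (Fin n → ℝ)) (a b : SIdx n) : Prop := fLT P (some a) (some b)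

lemma IsSignedPoset.combination_mem (hP : IsSignedPoset n P) {α β γ : Fin n → ℝ} {s t : ℝ}
    (hα : α ∈ P) (hβ : β ∈ P) (hs : 0 ≤ s) (ht : 0 ≤ t) (hγ : γ ∈ BnRoots n)
    (h : γ = s • α + t • β) : γ ∈ P := by
  refine hP.2.2 γ hγ ⟨2, ![s, t], ![α, β], ?_, ?_, ?_⟩
  · simpa [Fin.forall_fin_two] using ⟨hs, ht⟩
  · simpa [Fin.forall_fin_two] using ⟨hα, hβ⟩
  · simp [h]

lemma IsSignedPoset.zero_notMem (hP : IsSignedPoset n P) : (0 : Fin n → ℝ) ∉ P := fun h =>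
  hP.2.1 0 h (by rwa [neg_zero])

lemma vS_sub_vS_negS_notMem_BnRoots (a : SIdx n) : vS a - vS (negS a) ∉ BnRoots n := by
  intro h
  have hle := abs_apply_le_one_of_mem_BnRoots h a.2
  rw [vS_negS, sub_neg_eq_add, ← two_smul ℝ, Pi.smul_apply, vS_apply, if_pos rfl, smul_eq_mul,
    abs_mul, abs_rsgn] at hle
  norm_num at hle

lemma fischerLT_iff (hP : IsSignedPoset n P) :
    fischerLT P a b ↔ (a.2 ≠ b.2 ∧ vS a - vS b ∈ P) ∨ (b = negS a ∧ vS a ∈ P) := by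
  simp only [fischerLT, fLT, vO, negO, ne_eq, reduceCtorEq, not_false_eq_true,
    Option.some.injEq, true_and]
  refine or_congr_left ⟨fun h => ⟨fun hab => ?_, h⟩, And.right⟩
  rcases eq_or_eq_negS_of_snd_eq hab.symm with rfl | rfl
  · exact hP.zero_notMem (sub_self (vS b) ▸ h)
  · exact vS_sub_vS_negS_notMem_BnRoots a (hP.1 h)

lemma fischerLT_negS (hP : IsSignedPoset n P) (h : fischerLT P a b) :
    fischerLT P (negS b) (negS a) := by
  rw [fischerLT_iff hP] at h ⊢
  rcases h with ⟨hab, hmem⟩ | ⟨rfl, hmem⟩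
  · have heq : vS (negS b) - vS (negS a) = vS a - vS b := by rw [vS_negS, vS_negS]; abel
    exact .inl ⟨hab.symm, heq ▸ hmem⟩
  · rw [negS_negS]
    exact .inr ⟨rfl, hmem⟩

lemma fischerLT_irrefl (hP : IsSignedPoset n P) (a : SIdx n) : ¬fischerLT P a a := by
  rw [fischerLT_iff hP]
  rintro (⟨h, -⟩ | ⟨h, -⟩)
  · exact h rfl
  · exact negS_ne_self a h.symm

lemma fischerLT_trans (hP : IsSignedPoset n P) (hab : fischerLT P a b) (hbc : fischerLT P b c) :
    fischerLT P a c := by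
  rw [fischerLT_iff hP] at hab hbc ⊢
  rcases hab with ⟨hab, h₁⟩ | ⟨rfl, h₁⟩ <;> rcases hbc with ⟨hbc, h₂⟩ | ⟨rfl, h₂⟩
  · by_cases hac : a.2 = c.2
    · rcases eq_or_eq_negS_of_snd_eq hac.symm with rfl | rfl
      · exact absurd (neg_sub (vS c) (vS b) ▸ h₂) (hP.2.1 _ h₁)
      · refine .inr ⟨rfl, hP.combination_mem (s := 1 / 2) (t := 1 / 2) h₁ h₂ (by norm_num)
          (by norm_num) (vS_mem_BnRoots a) ?_⟩
        rw [vS_negS]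
        module
    · exact .inl ⟨hac, hP.combination_mem h₁ h₂ zero_le_one zero_le_one
        (vS_sub_vS_mem_BnRoots hac) (by module)⟩
  · refine .inl ⟨hab, hP.combination_mem h₁ h₂ zero_le_one zero_le_two
      (vS_sub_vS_mem_BnRoots hab) ?_⟩
    rw [vS_negS]
    module
  · refine .inl ⟨hbc, hP.combination_mem h₁ h₂ zero_le_two zero_le_one
      (vS_sub_vS_mem_BnRoots hbc) ?_⟩
    rw [vS_negS]
    module
  · exact absurd (vS_negS a ▸ h₂) (hP.2.1 _ h₁)

lemma isWellFounded_fischerLT (hP : IsSignedPoset n P) :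
    IsWellFounded (SIdx n) (fischerLT P) := by
  have : IsTrans (SIdx n) (fischerLT P) := ⟨fun _ _ _ => fischerLT_trans hP⟩
  have : Std.Irrefl (fischerLT P) := ⟨fischerLT_irrefl hP⟩
  exact ⟨Finite.wellFounded_of_trans_of_irrefl _⟩

/-! ### Ideals -/

lemma isotropic_iff : Isotropic J ↔ ∀ a ∈ J, negS a ∉ J := by
  constructor
  · rintro h ⟨s, i⟩ ha hna
    cases s
    · exact h i ⟨hna, ha⟩
    · exact h i ⟨ha, hna⟩
  · exact fun h i hi => h _ hi.1 hi.2

lemma Isotropic.mono (hU : Isotropic U) (h : J ⊆ U) : Isotropic J := fun i hi =>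
  hU i ⟨h hi.1, h hi.2⟩

lemma Isotropic.insert (hV : Isotropic V) (ha : negS a ∉ V) : Isotropic (insert a V) := by
  rw [isotropic_iff] at hV ⊢
  intro b hb hnb
  rcases Finset.mem_insert.1 hb with rfl | hb <;> rcases Finset.mem_insert.1 hnb with hba | hnb
  · exact negS_ne_self b hba
  · exact ha hnb
  · exact ha (by rwa [← hba, negS_negS])
  · exact hV b hb hnb

lemma Isotropic.card_eq_iff (hU : Isotropic U) :
    U.card = n ↔ ∀ a : SIdx n, a ∈ U ∨ negS a ∈ U := by
  have hinj : Set.InjOn Prod.snd (U : Set (SIdx n)) := fun a ha b hb hab =>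
    (eq_or_eq_negS_of_snd_eq hab).resolve_right fun h => isotropic_iff.1 hU b hb (h ▸ ha)
  have himage : U.card = n ↔ U.image Prod.snd = Finset.univ := by
    rw [← Finset.card_eq_iff_eq_univ, Finset.card_image_of_injOn hinj, Fintype.card_fin]
  rw [himage, Finset.eq_univ_iff_forall]
  simp [negS, or_comm]

lemma chiF_eq_sum_vS (hJ : Isotropic J) : chiF J = ∑ a ∈ J, vS a := by
  funext i
  have hsum : (∑ a ∈ J, vS a) i = ∑ a : SIdx n, if a ∈ J then vS a i else 0 := by simp
  rw [hsum, Fintype.sum_prod_type, Fintype.sum_bool]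
  have := hJ i
  simp only [chiF, vS_apply, rsgn, ← ite_and, and_comm]
  simp only [ite_and, Finset.sum_ite_eq, Finset.mem_univ, if_true]
  grind

lemma dotR_chiF_eq_sum (x : Fin n → ℝ) (hJ : Isotropic J) :
    dotR x (chiF J) = ∑ a ∈ J, dotR x (vS a) := by
  simp only [chiF_eq_sum_vS hJ, dotR_eq_dotProduct, dotProduct_sum]

lemma dotR_chiF_vS (hJ : Isotropic J) (a : SIdx n) :
    dotR (chiF J) (vS a) = if a ∈ J then 1 else if negS a ∈ J then -1 else 0 := by
  have := hJ a.2
  rw [dotR_vS]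
  rcases a with ⟨s, i⟩
  cases s <;> simp only [chiF, negS, rsgn] at * <;> grind

lemma isIdeal_iff (hP : IsSignedPoset n P) :
    IsIdeal P J ↔ Isotropic J ∧ IsDownClosed (fischerLT P) J := by
  refine and_congr_right fun hJ => ⟨fun h a b hab hb => ?_, fun h α hα => ?_⟩
  · rcases (fischerLT_iff hP).1 hab with ⟨-, hmem⟩ | ⟨rfl, hmem⟩ <;> specialize h _ hmem
    · rw [dotR_eq_dotProduct, dotProduct_sub, ← dotR_eq_dotProduct, ← dotR_eq_dotProduct,
        dotR_chiF_vS hJ, dotR_chiF_vS hJ, if_pos hb] at h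
      by_contra ha
      rw [if_neg ha] at h
      split_ifs at h <;> norm_num at h
    · by_contra ha
      rw [dotR_chiF_vS hJ, if_neg ha, if_pos hb] at h
      norm_num at h
  · rcases mem_BnRoots_iff.1 (hP.1 hα) with ⟨a, b, hab, rfl⟩ | ⟨a, rfl⟩
    · have hlt : fischerLT P a b := (fischerLT_iff hP).2 (.inl ⟨hab, hα⟩)
      have hb := @h _ _ hlt
      have hna := @h _ _ (fischerLT_negS hP hlt)
      rw [dotR_eq_dotProduct, dotProduct_sub, ← dotR_eq_dotProduct, ← dotR_eq_dotProduct,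
        dotR_chiF_vS hJ, dotR_chiF_vS hJ]
      split_ifs <;> simp_all
    · have hna := @h _ _ ((fischerLT_iff hP).2 (.inr ⟨rfl, hα⟩))
      rw [dotR_chiF_vS hJ]
      split_ifs <;> simp_all

lemma isConnIdeal_iff (hP : IsSignedPoset n P) :
    IsConnIdeal P J ↔ Isotropic J ∧ IsTube (fischerLT P) J := by
  rw [IsConnIdeal, isIdeal_iff hP, and_assoc]
  exact and_congr_right fun _ => ⟨fun h => ⟨h.1, h.2.1, h.2.2⟩,
    fun h => ⟨h.isDownClosed, h.isConnected.nonempty, h.isConnected.reachable⟩⟩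

lemma mem_JconnF (hP : IsSignedPoset n P) :
    J ∈ JconnF n P ↔ Isotropic J ∧ IsTube (fischerLT P) J := by
  rw [JconnF, Finset.mem_filter, isConnIdeal_iff hP, and_iff_right (Finset.mem_univ J)]

lemma exists_insert_isIdeal (hP : IsSignedPoset n P) (hV : IsIdeal P V) (hcard : V.card ≠ n) :
    ∃ a ∉ V, IsIdeal P (insert a V) := by
  obtain ⟨hiso, hdown⟩ := (isIdeal_iff hP).1 hV
  have := isWellFounded_fischerLT hP
  let W : Finset (SIdx n) := {a | negS a ∉ V}
  have hmemW : ∀ {a}, a ∈ W ↔ negS a ∉ V := by simp [W]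
  have hW : IsDownClosed (fischerLT P) W := fun a b hab hb =>
    hmemW.2 fun hna => hmemW.1 hb (hdown (fischerLT_negS hP hab) hna)
  have hWV : ¬W ⊆ V := fun hsub => hcard (hiso.card_eq_iff.2 fun a => by
    by_cases hna : negS a ∈ V
    · exact .inr hna
    · exact .inl (hsub (hmemW.2 hna)))
  obtain ⟨a, haW, haV, hins⟩ := exists_insert_isDownClosed hW hdown hWV
  exact ⟨a, haV, (isIdeal_iff hP).2 ⟨hiso.insert (hmemW.1 haW), hins⟩⟩

/-! ### Linear extensions -/

lemma spAct_vS {w : SIdx n ≃ SIdx n} (hw : IsSPerm w) (a : SIdx n) :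
    spAct w (vS a) = vS (w a) := by
  have hact : spAct w (vS a) = rsgn a.1 • vS (w (true, a.2)) := by simp [spAct, vS_apply]
  rcases a with ⟨s, i⟩
  cases s
  · have hneg : w (false, i) = negS (w (true, i)) := hw (true, i)
    rw [hact, hneg, vS_negS]
    simp [rsgn]
  · simp [hact, rsgn]

lemma spAct_sub (w : SIdx n ≃ SIdx n) (y z : Fin n → ℝ) :
    spAct w (y - z) = spAct w y - spAct w z := by
  simp [spAct, sub_smul, Finset.sum_sub_distrib]

lemma exists_spAct_eq_of_mem_BnRoots {w : SIdx n ≃ SIdx n} (hw : IsSPerm w) {α : Fin n → ℝ}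
    (hα : α ∈ BnRoots n) : ∃ β ∈ BnRoots n, α = spAct w β := by
  rcases mem_BnRoots_iff.1 hα with ⟨a, b, hab, rfl⟩ | ⟨a, rfl⟩
  · obtain ⟨a, rfl⟩ := w.surjective a
    obtain ⟨b, rfl⟩ := w.surjective b
    refine ⟨vS a - vS b, vS_sub_vS_mem_BnRoots fun h => hab ?_, ?_⟩
    · rcases eq_or_eq_negS_of_snd_eq h with rfl | rfl
      · rfl
      · rw [hw]; rfl
    · rw [spAct_sub, spAct_vS hw, spAct_vS hw]
  · obtain ⟨a, rfl⟩ := w.surjective a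
    exact ⟨vS a, vS_mem_BnRoots a, (spAct_vS hw a).symm⟩

lemma negS_notMem_image_of_isSPerm {w : SIdx n ≃ SIdx n} (hw : IsSPerm w) (S : Finset (Fin n))
    (i : Fin n) : negS (w (true, i)) ∉ S.image fun j => w (true, j) := by
  rw [← hw]
  simp [negS]

lemma isotropic_image_of_isSPerm {w : SIdx n ≃ SIdx n} (hw : IsSPerm w) (S : Finset (Fin n)) :
    Isotropic (S.image fun j => w (true, j)) := by
  simp only [isotropic_iff, Finset.forall_mem_image]
  exact fun i _ => negS_notMem_image_of_isSPerm hw S i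

lemma JwSet_eq_prefixSet (w : SIdx n ≃ SIdx n) (m : Fin n) :
    JwSet w m = prefixSet (fun j => w (true, j)) m := by
  rw [JwSet, prefixSet]
  congr 1
  ext
  simp

lemma dotR_chiF_JwSet_spAct {w : SIdx n ≃ SIdx n} (hw : IsSPerm w) (m : Fin n)
    (β : Fin n → ℝ) : dotR (chiF (JwSet w m)) (spAct w β) = ∑ i ∈ Finset.Iic m, β i := by
  have hcoeff (i : Fin n) :
      dotR (chiF (JwSet w m)) (vS (w (true, i))) = if i ∈ Finset.Iic m then 1 else 0 := by
    rw [JwSet_eq_prefixSet, prefixSet, dotR_chiF_vS (isotropic_image_of_isSPerm hw _),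
      if_neg (negS_notMem_image_of_isSPerm hw _ i)]
    simp
  simp only [dotR_eq_dotProduct] at hcoeff
  simp only [dotR_eq_dotProduct, spAct, dotProduct_sum, dotProduct_smul, hcoeff, smul_eq_mul,
    mul_ite, mul_one, mul_zero, Finset.sum_ite_mem, Finset.univ_inter]

/-- A root is positive iff its partial sums are nonnegative, and the partial sums of `w⁻¹α` are
the pairings of `α` with the vectors `χ` of the sets `J^w_m`. -/
lemma isLinExt_iff (hP : IsSignedPoset n P) {w : SIdx n ≃ SIdx n} (hw : IsSPerm w) :
    IsLinExt P w ↔ ∀ m, IsIdeal P (JwSet w m) := by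
  constructor
  · rintro ⟨-, h⟩ m
    refine ⟨JwSet_eq_prefixSet w m ▸ isotropic_image_of_isSPerm hw _, fun α hα => ?_⟩
    obtain ⟨β, hβ, rfl⟩ := h α hα
    rw [dotR_chiF_JwSet_spAct hw]
    exact sum_Iic_nonneg_of_mem_BnPos hβ m
  · refine fun h => ⟨hw, fun α hα => ?_⟩
    obtain ⟨β, hβ, rfl⟩ := exists_spAct_eq_of_mem_BnRoots hw (hP.1 hα)
    refine ⟨β, mem_BnPos_of_sum_Iic_nonneg hβ fun m => ?_, rfl⟩
    rw [← dotR_chiF_JwSet_spAct hw]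
    exact (h m).2 _ hα

lemma IsSPerm.eq_of_forall_true {w w' : SIdx n ≃ SIdx n} (hw : IsSPerm w) (hw' : IsSPerm w')
    (h : ∀ i, w (true, i) = w' (true, i)) : w = w' := by
  ext1 ⟨s, i⟩
  cases s
  · exact (hw (true, i)).trans ((congrArg negS (h i)).trans (hw' (true, i)).symm)
  · exact h i

lemma exists_isSPerm_of_injective {f : Fin n → SIdx n} (hinj : Function.Injective f)
    (hiso : Isotropic (Finset.univ.image f)) :
    ∃ w : SIdx n ≃ SIdx n, IsSPerm w ∧ ∀ i, w (true, i) = f i := by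
  let g : SIdx n → SIdx n := fun a => if a.1 then f a.2 else negS (f a.2)
  have hneg (i j : Fin n) : f i ≠ negS (f j) := fun h =>
    isotropic_iff.1 hiso (f j) (Finset.mem_image_of_mem f (Finset.mem_univ j))
      (h ▸ Finset.mem_image_of_mem f (Finset.mem_univ i))
  have hg : Function.Injective g := by
    rintro ⟨s, i⟩ ⟨t, j⟩ h
    cases s <;> cases t <;> simp only [g, if_true, Bool.false_eq_true, if_false] at h
    · rw [hinj (Function.LeftInverse.injective negS_negS h)]
    · exact absurd h.symm (hneg j i)
    · exact absurd h (hneg i j)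
    · rw [hinj h]
  refine ⟨Equiv.ofBijective g (Finite.injective_iff_bijective.1 hg), ?_, fun i => by simp [g]⟩
  rintro ⟨s, i⟩
  cases s <;> simp [g, negS]

/-- The ideals of `P` with `n` elements, i.e. containing exactly one of `±i` for every `i`. -/
def fullIdeals (P : Set (Fin n → ℝ)) : Finset (Finset (SIdx n)) := {U | IsIdeal P U ∧ U.card = n}

lemma mem_fullIdeals : U ∈ fullIdeals P ↔ IsIdeal P U ∧ U.card = n := by
  simp [fullIdeals]

lemma isLowerEnum_of_isLinExt (hP : IsSignedPoset n P) {w : SIdx n ≃ SIdx n}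
    (hw : IsLinExt P w) :
    IsLowerEnum (fischerLT P) (Finset.univ.image fun j => w (true, j)) fun j => w (true, j) where
  injective _ _ h := congrArg Prod.snd (w.injective h)
  image_univ := rfl
  isDownClosed_prefixSet m :=
    JwSet_eq_prefixSet w m ▸ ((isIdeal_iff hP).1 ((isLinExt_iff hP hw.1).1 hw m)).2

lemma IsLowerEnum.exists_isLinExt (hP : IsSignedPoset n P) {f : Fin n → SIdx n}
    (hf : IsLowerEnum (fischerLT P) U f) (hU : Isotropic U) :
    ∃ w : SIdx n ≃ SIdx n, IsLinExt P w ∧ (fun j => w (true, j)) = f := by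
  obtain ⟨w, hw, hwf⟩ := exists_isSPerm_of_injective hf.injective (hf.image_univ.symm ▸ hU)
  have hwf : (fun j => w (true, j)) = f := funext hwf
  refine ⟨w, (isLinExt_iff hP hw).2 fun m => (isIdeal_iff hP).2 ⟨?_, ?_⟩, hwf⟩ <;>
    rw [JwSet_eq_prefixSet]
  · exact isotropic_image_of_isSPerm hw _
  · exact hwf ▸ hf.isDownClosed_prefixSet m

lemma sum_linExts_eq_sum_lowerEnums {M : Type*} [AddCommMonoid M] (hP : IsSignedPoset n P)
    (F : (Fin n → SIdx n) → M) :
    ∑ w ∈ linExts n P, F (fun j => w (true, j)) =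
      ∑ U ∈ fullIdeals P, ∑ f ∈ lowerEnums (fischerLT P) U n, F f := by
  rw [Finset.sum_sigma']
  refine Finset.sum_bij
    (fun w _ => ⟨Finset.univ.image fun j => w (true, j), fun j => w (true, j)⟩) ?_ ?_ ?_
    (fun _ _ => rfl) <;>
    simp only [linExts, Finset.mem_filter, Finset.mem_univ, true_and, Finset.mem_sigma,
      mem_fullIdeals, mem_lowerEnums]
  · intro w hw
    have henum := isLowerEnum_of_isLinExt hP hw
    refine ⟨⟨(isIdeal_iff hP).2 ⟨isotropic_image_of_isSPerm hw.1 _, henum.isDownClosed⟩, ?_⟩, henum⟩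
    rw [Finset.card_image_of_injective _ henum.injective, Finset.card_univ, Fintype.card_fin]
  · intro w hw w' hw' h
    exact hw.1.eq_of_forall_true hw'.1 (congrFun (eq_of_heq (Sigma.mk.inj h).2))
  · rintro ⟨U, f⟩ ⟨⟨hU, -⟩, hf⟩
    obtain ⟨w, hw, rfl⟩ := hf.exists_isLinExt hP hU.1
    exact ⟨w, hw, by rw [hf.image_univ]⟩

/-! ### Maximal families of connected ideals -/

/-- The graph on subsets of `±[n]` joining two sets that intersect nontrivially. -/
def nontrivInterGraph (n : ℕ) : SimpleGraph (Finset (SIdx n)) where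
  Adj := NontrivInter
  symm := ⟨fun J K h => ⟨Finset.inter_comm (suppF J) (suppF K) ▸ h.1, h.2.2, h.2.1⟩⟩
  loopless := ⟨fun _ h => h.2.1 subset_rfl⟩

lemma nontrivInterGraph_adj_of_negS_mem (hJ : Isotropic J) (hK : Isotropic K) (haJ : a ∈ J)
    (haK : negS a ∈ K) : (nontrivInterGraph n).Adj J K := by
  refine ⟨⟨a.2, Finset.mem_inter.2 ⟨Finset.mem_image_of_mem _ haJ,
    Finset.mem_image.2 ⟨negS a, haK, rfl⟩⟩⟩, fun h => ?_, fun h => ?_⟩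
  · exact isotropic_iff.1 hK a (h haJ) haK
  · exact isotropic_iff.1 hJ a haJ (h haK)

lemma nontrivInterGraph_adj_iff_crossing (hU : Isotropic U) (hJ : J ⊆ U) (hK : K ⊆ U) :
    (nontrivInterGraph n).Adj J K ↔ (crossingGraph (SIdx n)).Adj J K := by
  refine and_congr_left fun _ => ?_
  rw [Finset.not_disjoint_iff]
  constructor
  · rintro ⟨i, hi⟩
    simp only [suppF, Finset.mem_inter, Finset.mem_image] at hi
    obtain ⟨⟨a, ha, rfl⟩, b, hb, hba⟩ := hi
    rcases eq_or_eq_negS_of_snd_eq hba with rfl | rfl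
    · exact ⟨b, ha, hb⟩
    · exact absurd (hK hb) (isotropic_iff.1 hU a (hJ ha))
  · rintro ⟨a, haJ, haK⟩
    exact ⟨a.2, Finset.mem_inter.2 ⟨Finset.mem_image_of_mem _ haJ, Finset.mem_image_of_mem _ haK⟩⟩

lemma IsMaxNested.isMaxIndepIn_JconnF {T : Finset (Finset (SIdx n))} (hP : IsSignedPoset n P)
    (hU : U ∈ fullIdeals P) (hT : IsMaxNested (fischerLT P) U T) :
    IsMaxIndepIn (nontrivInterGraph n) (JconnF n P) T := by
  obtain ⟨hUideal, hcard⟩ := mem_fullIdeals.1 hU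
  obtain ⟨hiso, hdown⟩ := (isIdeal_iff hP).1 hUideal
  have := isWellFounded_fischerLT hP
  have hTU : ∀ K ∈ T, K ⊆ U := fun K hK => hT.subset_of_mem hK
  refine ⟨fun K hK => (mem_JconnF hP).2 ⟨hiso.mono (hTU K hK), hT.isTube_of_mem hK⟩,
    fun J hJ => ?_⟩
  obtain ⟨hJiso, hJ⟩ := (mem_JconnF hP).1 hJ
  have hJU (h : ∀ K ∈ T, ¬(nontrivInterGraph n).Adj J K) : J ⊆ U := by
    refine fun a ha => (hiso.card_eq_iff.1 hcard a).resolve_right fun hna => ?_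
    rw [← hT.biUnion_eq hdown] at hna
    obtain ⟨K, hK, hna⟩ := Finset.mem_biUnion.1 hna
    exact h K hK (nontrivInterGraph_adj_of_negS_mem hJiso (hiso.mono (hTU K hK)) ha hna)
  have hiff (hJU : J ⊆ U) : J ∈ T ↔ ∀ K ∈ T, ¬(nontrivInterGraph n).Adj J K :=
    (hT.mem_iff J (mem_tubesIn.2 ⟨hJU, hJ⟩)).trans <| forall₂_congr fun K hK =>
      not_congr (nontrivInterGraph_adj_iff_crossing hiso hJU (hTU K hK)).symm
  exact ⟨fun hJT => (hiff (hTU J hJT)).1 hJT, fun h => (hiff (hJU h)).2 h⟩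

lemma isIdeal_biUnion_of_isMaxIndepIn {T : Finset (Finset (SIdx n))} (hP : IsSignedPoset n P)
    (hT : IsMaxIndepIn (nontrivInterGraph n) (JconnF n P) T) : IsIdeal P (T.biUnion id) := by
  have hTconn : ∀ J ∈ T, Isotropic J ∧ IsTube (fischerLT P) J := fun J hJ =>
    (mem_JconnF hP).1 (hT.subset hJ)
  refine (isIdeal_iff hP).2 ⟨isotropic_iff.2 fun a ha hna => ?_,
    IsDownClosed.biUnion fun J hJ => (hTconn J hJ).2.isDownClosed⟩
  obtain ⟨J, hJ, ha⟩ := Finset.mem_biUnion.1 ha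
  obtain ⟨K, hK, hna⟩ := Finset.mem_biUnion.1 hna
  exact hT.not_adj hJ hK
    (nontrivInterGraph_adj_of_negS_mem (hTconn J hJ).1 (hTconn K hK).1 ha hna)

lemma biUnion_mem_fullIdeals_of_isMaxIndepIn {T : Finset (Finset (SIdx n))}
    (hP : IsSignedPoset n P) (hT : IsMaxIndepIn (nontrivInterGraph n) (JconnF n P) T) :
    T.biUnion id ∈ fullIdeals P := by
  have hV := isIdeal_biUnion_of_isMaxIndepIn hP hT
  refine mem_fullIdeals.2 ⟨hV, by_contra fun hcard => ?_⟩
  obtain ⟨a, haV, hW⟩ := exists_insert_isIdeal hP hV hcard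
  set W := insert a (T.biUnion id)
  obtain ⟨hWiso, hWdown⟩ := (isIdeal_iff hP).1 hW
  have haW : a ∈ W := Finset.mem_insert_self _ _
  have hmem : component (fischerLT P) W a ∈ T := by
    refine (hT.mem_iff _ ((mem_JconnF hP).2
      ⟨hWiso.mono component_subset, isTube_component hWdown haW⟩)).2 fun K hK => ?_
    have hKW : K ⊆ W := (Finset.subset_biUnion_of_mem id hK).trans (Finset.subset_insert _ _)
    rw [nontrivInterGraph_adj_iff_crossing hWiso component_subset hKW]
    exact component_not_crossing ((mem_JconnF hP).1 (hT.subset hK)).2.isConnected hKW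
  exact haV (Finset.mem_biUnion.2 ⟨_, hmem, mem_component_self haW⟩)

lemma isMaxNested_biUnion_of_isMaxIndepIn {T : Finset (Finset (SIdx n))} (hP : IsSignedPoset n P)
    (hT : IsMaxIndepIn (nontrivInterGraph n) (JconnF n P) T) :
    IsMaxNested (fischerLT P) (T.biUnion id) T := by
  have hiso := (isIdeal_biUnion_of_isMaxIndepIn hP hT).1
  have hsub : ∀ K ∈ T, K ⊆ T.biUnion id := fun K hK => Finset.subset_biUnion_of_mem id hK
  refine ⟨fun K hK => mem_tubesIn.2 ⟨hsub K hK, ((mem_JconnF hP).1 (hT.subset hK)).2⟩,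
    fun J hJ => ?_⟩
  obtain ⟨hJV, hJ⟩ := mem_tubesIn.1 hJ
  exact (hT.mem_iff J ((mem_JconnF hP).2 ⟨hiso.mono hJV, hJ⟩)).trans <|
    forall₂_congr fun K hK => not_congr (nontrivInterGraph_adj_iff_crossing hiso hJV (hsub K hK))

lemma maxIndepSum_JconnF_eq_sum_nestedSum (hP : IsSignedPoset n P) (x : Fin n → ℝ) :
    maxIndepSum (nontrivInterGraph n) (fun J => (dotR x (chiF J))⁻¹) (JconnF n P) =
      ∑ U ∈ fullIdeals P, nestedSum (fischerLT P) (fun a => dotR x (vS a)) U := by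
  have := isWellFounded_fischerLT hP
  have hdown : ∀ U ∈ fullIdeals P, IsDownClosed (fischerLT P) U := fun U hU =>
    ((isIdeal_iff hP).1 (mem_fullIdeals.1 hU).1).2
  simp only [nestedSum, maxIndepSum, Finset.sum_sigma']
  refine Finset.sum_bij' (fun T _ => ⟨T.biUnion id, T⟩) (fun p _ => p.2) ?_ ?_
    (fun _ _ => rfl) ?_ ?_ <;>
    simp only [Finset.mem_sigma, mem_maxIndepSets]
  · exact fun T hT => ⟨biUnion_mem_fullIdeals_of_isMaxIndepIn hP hT,
      isMaxNested_biUnion_of_isMaxIndepIn hP hT⟩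
  · exact fun p hp => IsMaxNested.isMaxIndepIn_JconnF hP hp.1 hp.2
  · exact fun p hp => by rw [IsMaxNested.biUnion_eq hp.2 (hdown p.1 hp.1)]
  · exact fun T hT => Finset.prod_congr rfl fun J hJ => by
      rw [dotR_chiF_eq_sum x ((mem_JconnF hP).1 (hT.subset hJ)).1]

theorem sum_linExts_eq_maxIndepSum (hP : IsSignedPoset n P) (x : Fin n → ℝ)
    (hx : ∀ J : Finset (SIdx n), IsIdeal P J → J.Nonempty → dotR x (chiF J) ≠ 0) :
    ∑ w ∈ linExts n P, ∏ m : Fin n, (dotR x (chiF (JwSet w m)))⁻¹ =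
      maxIndepSum (nontrivInterGraph n) (fun J => (dotR x (chiF J))⁻¹) (JconnF n P) := by
  have := isWellFounded_fischerLT hP
  simp only [JwSet_eq_prefixSet]
  rw [sum_linExts_eq_sum_lowerEnums hP fun f => ∏ m, (dotR x (chiF (prefixSet f m)))⁻¹,
    maxIndepSum_JconnF_eq_sum_nestedSum hP]
  refine Finset.sum_congr rfl fun U hU => ?_
  obtain ⟨hUideal, hcard⟩ := mem_fullIdeals.1 hU
  obtain ⟨hiso, hdown⟩ := (isIdeal_iff hP).1 hUideal
  rw [← sum_lowerEnums_eq_nestedSum _ hdown hcard fun J hJU hJ hne => by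
    rw [← dotR_chiF_eq_sum x (hiso.mono hJU)]
    exact hx J ((isIdeal_iff hP).2 ⟨hiso.mono hJU, hJ⟩) hne]
  refine Finset.sum_congr rfl fun f hf => Finset.prod_congr rfl fun m _ => ?_
  have hsub : prefixSet f m ⊆ U :=
    (mem_lowerEnums.1 hf).image_univ ▸ Finset.image_subset_image (Finset.subset_univ _)
  rw [dotR_chiF_eq_sum x (hiso.mono hsub)]

lemma PiP_eq_edgesIn : PiP n P = edgesIn (nontrivInterGraph n) (JconnF n P) := by
  ext e
  induction e with | _ J K
  simp only [PiP, inPiP, JconnF, mk_mem_edgesIn, Finset.mem_filter, Finset.mem_univ, true_and]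
  constructor
  · rintro ⟨J', K', he, hJ, hK, hJK⟩
    rcases Sym2.eq_iff.1 he with ⟨rfl, rfl⟩ | ⟨rfl, rfl⟩
    · exact ⟨⟨hJ, hK⟩, hJK⟩
    · exact ⟨⟨hK, hJ⟩, SimpleGraph.Adj.symm (G := nontrivInterGraph n) hJK⟩
  · rintro ⟨⟨hJ, hK⟩, hJK⟩
    exact ⟨J, K, rfl, hJ, hK, hJK⟩

end SignedPosets

theorem statement_18 (n : ℕ) (hn : 1 ≤ n) (P : Set (Fin n → ℝ)) (hP : IsSignedPoset n P)
    (hci : NoDoubleNontriv n P) (x : Fin n → ℝ)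
    (hx : ∀ J : Finset (SIdx n), IsIdeal P J → J.Nonempty → dotR x (chiF J) ≠ 0) :
    ∑ w ∈ linExts n P, ∏ m : Fin n, (dotR x (chiF (JwSet w m)))⁻¹ =
      (∏ p ∈ PiP n P, pairDot x p) / ∏ J ∈ JconnF n P, dotR x (chiF J) := by
  have hconn : ∀ J ∈ JconnF n P, IsConnIdeal P J := fun J hJ => (Finset.mem_filter.1 hJ).2
  rw [sum_linExts_eq_maxIndepSum hP x hx, PiP_eq_edgesIn]
  refine maxIndepSum_inv_of_matching (fun J => dotR x (chiF J)) (pairDot x)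
    (fun J K => dotProduct_add x (chiF J) (chiF K)) ?_ ?_
  · exact fun J hJ => hx J (hconn J hJ).1 (hconn J hJ).2.1
  · exact fun J hJ K hK L hL => hci J K L (hconn J hJ) (hconn K hK) (hconn L hL)
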